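/- arXiv:0912.1842 — 4 statements merged into one kernel-verified Lean document; each statement's English description precedes it below -/
import Mathlib

section
/- There exist absolute constants c₀, c₁ > 0 such that the following holds. Let N' be a prime, let η > 0, and let A' ⊆ ℤ/N'ℤ with |A'| ≥ ηN'. Then the number of triples (n₁, n₂, n₃) ∈ A'³ with n₁ + n₃ = 2n₂ is at least η·N'²/(c₀·exp(c₁·η^{−3/2}·(log(1/η))³)). -/
namespace VC

open Finset

set_option linter.unusedSectionVars false
set_option linter.unusedVariables false

variable {G : Type*} [AddCommGroup G] [Fintype G] [DecidableEq G]

/-- Bohr set. -/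
noncomputable def bohr (Γ : Finset (AddChar G ℂ)) (ρ : ℝ) : Finset G :=
  open Classical in univ.filter (fun x => ∀ γ ∈ Γ, ‖1 - γ x‖ ≤ ρ)

lemma mem_bohr {Γ : Finset (AddChar G ℂ)} {ρ : ℝ} {x : G} :
    x ∈ bohr Γ ρ ↔ ∀ γ ∈ Γ, ‖1 - γ x‖ ≤ ρ := by
  classical
  simp [bohr]

lemma norm_one_sub_add (γ : AddChar G ℂ) (x y : G) :
    ‖1 - γ (x + y)‖ ≤ ‖1 - γ x‖ + ‖1 - γ y‖ := by
  have : 1 - γ (x + y) = (1 - γ x) + γ x * (1 - γ y) := by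
    rw [AddChar.map_add_eq_mul]; ring
  rw [this]
  refine (norm_add_le _ _).trans ?_
  rw [norm_mul, AddChar.norm_apply, one_mul]

lemma norm_sub_char (γ : AddChar G ℂ) (x y : G) :
    ‖γ x - γ y‖ = ‖1 - γ (y - x)‖ := by
  have : γ x - γ y = γ x * (1 - γ (y - x)) := by
    rw [mul_sub, ← AddChar.map_add_eq_mul, mul_one]; congr 2; abel
  rw [this, norm_mul, AddChar.norm_apply, one_mul]

lemma norm_one_sub_neg (γ : AddChar G ℂ) (x : G) :
    ‖1 - γ (-x)‖ = ‖1 - γ x‖ := by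
  have h := norm_sub_char γ x 0
  have h' := norm_sub_char γ 0 x
  rw [zero_sub] at h
  rw [← h, norm_sub_rev, h', sub_zero]

lemma bohr_add {Γ : Finset (AddChar G ℂ)} {ρ σ τ : ℝ} {x y : G} (hx : x ∈ bohr Γ ρ)
    (hy : y ∈ bohr Γ σ) (h : ρ + σ ≤ τ) : x + y ∈ bohr Γ τ := by
  rw [mem_bohr] at *
  intro γ hγ
  have := norm_one_sub_add γ x y
  linarith [hx γ hγ, hy γ hγ]

lemma bohr_neg {Γ : Finset (AddChar G ℂ)} {ρ : ℝ} {x : G} (hx : x ∈ bohr Γ ρ) :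
    -x ∈ bohr Γ ρ := by
  rw [mem_bohr] at *
  intro γ hγ
  rw [norm_one_sub_neg]; exact hx γ hγ

lemma bohr_sub {Γ : Finset (AddChar G ℂ)} {ρ σ τ : ℝ} {x y : G} (hx : x ∈ bohr Γ ρ)
    (hy : y ∈ bohr Γ σ) (h : ρ + σ ≤ τ) : x - y ∈ bohr Γ τ := by
  rw [sub_eq_add_neg]; exact bohr_add hx (bohr_neg hy) h

lemma bohr_mono {Γ : Finset (AddChar G ℂ)} {ρ σ : ℝ} (h : ρ ≤ σ) : bohr Γ ρ ⊆ bohr Γ σ := by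
  intro x; simp only [mem_bohr]
  exact fun hx γ hγ => (hx γ hγ).trans h

lemma bohr_anti {Γ Δ : Finset (AddChar G ℂ)} {ρ : ℝ} (h : Γ ⊆ Δ) : bohr Δ ρ ⊆ bohr Γ ρ := by
  intro x; simp only [mem_bohr]
  exact fun hx γ hγ => hx γ (h hγ)

lemma zero_mem_bohr {Γ : Finset (AddChar G ℂ)} {ρ : ℝ} (h : 0 ≤ ρ) : (0 : G) ∈ bohr Γ ρ := by
  rw [mem_bohr]; intro γ _; simpa using h

lemma bohr_card_pos {Γ : Finset (AddChar G ℂ)} {ρ : ℝ} (h : 0 ≤ ρ) :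
    (0 : ℝ) < (bohr Γ ρ).card := by
  exact_mod_cast Finset.card_pos.mpr ⟨0, zero_mem_bohr h⟩

lemma bohr_double (Γ : Finset (AddChar G ℂ)) {ρ : ℝ} (hρ : 0 < ρ) :
    (bohr Γ (2 * ρ)).card ≤ 128 ^ Γ.card * (bohr Γ ρ).card := by
  classical
  let t : Finset (Γ → ℤ × ℤ) := Fintype.piFinset (fun _ : Γ => Icc (-4 : ℤ) 4 ×ˢ Icc (-4 : ℤ) 4)
  let f : G → (Γ → ℤ × ℤ) := fun x γ =>
    (⌊2 * (1 - γ.1 x).re / ρ⌋, ⌊2 * (1 - γ.1 x).im / ρ⌋)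
  have ht : t.card ≤ 128 ^ Γ.card := by
    simp only [t, Fintype.card_piFinset, card_product, Int.card_Icc, Finset.prod_const]
    rw [Finset.card_univ, Fintype.card_coe]
    gcongr
    decide
  have key : ∀ r : ℝ, |r| ≤ 2 * ρ → ⌊2 * r / ρ⌋ ∈ Icc (-4 : ℤ) 4 := by
    intro r hr
    rw [abs_le] at hr
    rw [mem_Icc]
    constructor
    · rw [Int.le_floor, le_div_iff₀ hρ]; push_cast; linarith
    · have : (2 * r / ρ) ≤ 4 := by rw [div_le_iff₀ hρ]; linarith
      have h2 := (Int.floor_le (2 * r / ρ)).trans this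
      exact_mod_cast h2
  have hmaps : ∀ x ∈ bohr Γ (2 * ρ), f x ∈ t := by
    intro x hx
    rw [mem_bohr] at hx
    simp only [t, Fintype.mem_piFinset, f, mem_product]
    intro γ
    exact ⟨key _ ((Complex.abs_re_le_norm _).trans (hx γ.1 γ.2)),
      key _ ((Complex.abs_im_le_norm _).trans (hx γ.1 γ.2))⟩
  have keyf : ∀ r s : ℝ, ⌊2 * r / ρ⌋ = ⌊2 * s / ρ⌋ → |r - s| ≤ ρ / 2 := by
    intro r s h
    have := Int.abs_sub_lt_one_of_floor_eq_floor h
    have e : 2 * r / ρ - 2 * s / ρ = (r - s) * (2 / ρ) := by ring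
    rw [e, abs_mul, abs_of_pos (by positivity : 2 / ρ > 0), mul_div_assoc', div_lt_one hρ] at this
    linarith
  have hfib : ∀ a ∈ t, ((bohr Γ (2 * ρ)).filter (fun x => f x = a)).card ≤ (bohr Γ ρ).card := by
    intro a _
    rcases ((bohr Γ (2 * ρ)).filter (fun x => f x = a)).eq_empty_or_nonempty with h | ⟨x0, h0⟩
    · rw [h]; simp
    · refine Finset.card_le_card_of_injOn (fun x => x - x0) ?_ (fun x _ y _ h => sub_left_injective h)
      intro x hx
      simp only [mem_coe, mem_filter] at hx h0
      simp only [mem_coe, mem_bohr]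
      intro γ hγ
      rw [← norm_sub_char]
      have hh : f x ⟨γ, hγ⟩ = f x0 ⟨γ, hγ⟩ := by rw [hx.2, h0.2]
      simp only [f, Prod.mk.injEq] at hh
      have h1 := keyf _ _ hh.1
      have h2 := keyf _ _ hh.2
      have e : γ x0 - γ x = (1 - γ x) - (1 - γ x0) := by ring
      rw [e]
      refine (Complex.norm_le_abs_re_add_abs_im _).trans ?_
      rw [Complex.sub_re, Complex.sub_im]
      linarith
  have := Finset.card_le_mul_card_image_of_maps_to (s := bohr Γ (2 * ρ)) hmaps _ hfib
  calc _ ≤ (bohr Γ ρ).card * t.card := this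
    _ ≤ (bohr Γ ρ).card * 128 ^ Γ.card := by gcongr
    _ = _ := mul_comm _ _

lemma bohr_two (Γ : Finset (AddChar G ℂ)) : bohr Γ 2 = univ := by
  ext x
  simp only [mem_bohr, mem_univ, iff_true]
  intro γ _
  refine (norm_sub_le _ _).trans ?_
  rw [AddChar.norm_apply]; norm_num

lemma bohr_size (Γ : Finset (AddChar G ℂ)) (k : ℕ) :
    Fintype.card G ≤ 128 ^ (Γ.card * k) * (bohr Γ (2 / 2 ^ k)).card := by
  induction k with
  | zero => simp [bohr_two]
  | succ k ih =>
    have h := bohr_double Γ (ρ := 2 / 2 ^ (k + 1)) (by positivity)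
    have e : (2 : ℝ) * (2 / 2 ^ (k + 1)) = 2 / 2 ^ k := by rw [pow_succ]; field_simp
    rw [e] at h
    calc _ ≤ _ := ih
      _ ≤ 128 ^ (Γ.card * k) * (128 ^ Γ.card * (bohr Γ (2 / 2 ^ (k + 1))).card) := by gcongr
      _ = _ := by rw [mul_add Γ.card, pow_add 128, mul_one, mul_assoc]

lemma bohr_regular (Γ : Finset (AddChar G ℂ)) {d : ℕ} (hd : 1 ≤ d) (hΓ : Γ.card ≤ d)
    {ρ ε : ℝ} (hρ : 0 < ρ) (hε : 0 < ε) (hε1 : ε ≤ 1) :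
    ∃ ρ', ρ / 2 ≤ ρ' ∧ ρ' ≤ ρ ∧
      ((bohr Γ (ρ' + ε * ρ / (16 * d))).card : ℝ) ≤ (1 + ε) * (bohr Γ ρ').card := by
  set J : ℕ := ⌈7 * d / ε⌉₊ with hJ
  have hd' : (1 : ℝ) ≤ d := by exact_mod_cast hd
  have hJ1 : 7 * d / ε ≤ J := Nat.le_ceil _
  have hJ2 : (J : ℝ) < 7 * d / ε + 1 := Nat.ceil_lt_add_one (by positivity)
  have hdε : 1 ≤ d / ε := by rw [le_div_iff₀ hε]; linarith
  have hJ0 : (0 : ℝ) < J := lt_of_lt_of_le (by positivity) hJ1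
  by_contra! hcon
  have step0 : ∀ j : ℕ, j + 1 ≤ J →
      (1 + ε) ^ j * ((bohr Γ (ρ / 2)).card : ℝ) ≤ (bohr Γ (ρ / 2 + j * (ρ / (2 * J)))).card →
      (1 + ε) ^ (j + 1) * ((bohr Γ (ρ / 2)).card : ℝ) <
        (bohr Γ (ρ / 2 + (j + 1 : ℕ) * (ρ / (2 * J)))).card := by
      intro j hj h1
      have hjJ : (j : ℝ) + 1 ≤ J := by exact_mod_cast hj
      have hle : ρ / 2 + j * (ρ / (2 * J)) ≤ ρ := by
        have : (j : ℝ) * (ρ / (2 * J)) ≤ J * (ρ / (2 * J)) := by gcongr; linarith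
        have e : (J : ℝ) * (ρ / (2 * J)) = ρ / 2 := by field_simp
        linarith
      have h2 := hcon (ρ / 2 + j * (ρ / (2 * J))) (by have : 0 ≤ (j : ℝ) * (ρ / (2 * J)) := by positivity
                                                      linarith) hle
      have h3 : ε * ρ / (16 * d) ≤ ρ / (2 * J) := by
        rw [div_le_div_iff₀ (by positivity) (by positivity)]
        have : (J : ℝ) * ε ≤ 8 * d := by
          have : (J : ℝ) ≤ 8 * (d / ε) := by
            have e : 7 * (d : ℝ) / ε = 7 * (d / ε) := by ring
            linarith
          calc (J : ℝ) * ε ≤ 8 * (d / ε) * ε := by gcongr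
            _ = 8 * d := by field_simp
        nlinarith
      have h4 : (bohr Γ (ρ / 2 + j * (ρ / (2 * J)) + ε * ρ / (16 * d))).card ≤
          (bohr Γ (ρ / 2 + (j + 1 : ℕ) * (ρ / (2 * J)))).card := by
        apply Finset.card_le_card
        apply bohr_mono
        push_cast
        linarith
      have h4' : ((bohr Γ (ρ / 2 + j * (ρ / (2 * J)) + ε * ρ / (16 * d))).card : ℝ) ≤
          (bohr Γ (ρ / 2 + (j + 1 : ℕ) * (ρ / (2 * J)))).card := by exact_mod_cast h4
      calc (1 + ε) ^ (j + 1) * ((bohr Γ (ρ / 2)).card : ℝ)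
          = (1 + ε) * ((1 + ε) ^ j * ((bohr Γ (ρ / 2)).card : ℝ)) := by ring
        _ ≤ (1 + ε) * (bohr Γ (ρ / 2 + j * (ρ / (2 * J)))).card := by gcongr
        _ < _ := h2
        _ ≤ _ := h4'
  have step : ∀ j : ℕ, j ≤ J →
      (1 + ε) ^ j * ((bohr Γ (ρ / 2)).card : ℝ) ≤ (bohr Γ (ρ / 2 + j * (ρ / (2 * J)))).card := by
    intro j
    induction j with
    | zero => intro _; simp
    | succ j ih =>
      intro hj
      exact (step0 j hj (ih (by omega))).le
  -- strictness via one more application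
  obtain ⟨j, hj⟩ : ∃ j, J = j + 1 := Nat.exists_eq_succ_of_ne_zero (by
    intro h; rw [h] at hJ0; simp at hJ0)
  have hfin := step0 j hj.symm.le (step j (by omega))
  rw [← hj] at hfin
  have e : ρ / 2 + (J : ℝ) * (ρ / (2 * J)) = ρ := by field_simp; ring
  rw [e] at hfin
  have hpow : (2 : ℝ) ^ (7 * d) ≤ (1 + ε) ^ J := by
    have h1 : (2 : ℝ) ^ ε ≤ 1 + ε := by
      have := rpow_one_add_le_one_add_mul_self (s := 1) (p := ε) (by norm_num) hε.le hε1
      norm_num at this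
      linarith
    calc (2 : ℝ) ^ (7 * d) = (2 : ℝ) ^ ((7 * d : ℕ) : ℝ) := (Real.rpow_natCast _ _).symm
      _ ≤ (2 : ℝ) ^ (ε * J) := by
          apply Real.rpow_le_rpow_of_exponent_le (by norm_num)
          push_cast
          rw [div_le_iff₀ hε] at hJ1
          linarith
      _ = ((2 : ℝ) ^ ε) ^ J := by rw [Real.rpow_mul (by norm_num), Real.rpow_natCast]
      _ ≤ _ := by gcongr
  have hdb := bohr_double Γ (ρ := ρ / 2) (by positivity)
  rw [mul_div_cancel₀ _ (by norm_num : (2 : ℝ) ≠ 0)] at hdb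
  have hdb' : ((bohr Γ ρ).card : ℝ) ≤ 2 ^ (7 * d) * (bohr Γ (ρ / 2)).card := by
    have h1 : ((bohr Γ ρ).card : ℝ) ≤ 128 ^ Γ.card * (bohr Γ (ρ / 2)).card := by exact_mod_cast hdb
    have h2 : (128 : ℝ) ^ Γ.card ≤ 2 ^ (7 * d) := by
      rw [pow_mul]; norm_num
      exact pow_le_pow_right₀ (by norm_num) hΓ
    refine h1.trans ?_
    gcongr
  have : (2 : ℝ) ^ (7 * d) * ((bohr Γ (ρ / 2)).card : ℝ) ≤ (1 + ε) ^ J * (bohr Γ (ρ / 2)).card := by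
    gcongr
  linarith

end VC


namespace VC

open Finset

set_option linter.unusedSectionVars false
set_option linter.unusedVariables false

variable {G : Type*} [AddCommGroup G] [Fintype G] [DecidableEq G]

/-- normalised Fourier coefficient -/
noncomputable def ft (S : Finset G) (χ : AddChar G ℂ) : ℂ := (∑ s ∈ S, χ s) / S.card

lemma norm_ft_le_one (S : Finset G) (χ : AddChar G ℂ) : ‖ft S χ‖ ≤ 1 := by
  unfold ft
  rw [norm_div, Complex.norm_natCast]
  apply div_le_one_of_le₀ _ (by positivity)
  refine (norm_sum_le _ _).trans ?_
  simp [AddChar.norm_apply]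

/-- products with exponents in `{-1, 0, 1}` -/
def Sp : List (AddChar G ℂ) → AddChar G ℂ → Prop
  | [], ψ => ψ = 1
  | γ :: l, ψ => Sp l ψ ∨ (∃ φ, Sp l φ ∧ ψ = γ * φ) ∨ (∃ φ, Sp l φ ∧ ψ = γ⁻¹ * φ)

lemma Sp_one (l : List (AddChar G ℂ)) : Sp l 1 := by
  induction l with
  | nil => rfl
  | cons γ l ih => exact Or.inl ih

lemma Sp_norm {l : List (AddChar G ℂ)} {ψ : AddChar G ℂ} (h : Sp l ψ) {v : G} {ν : ℝ}
    (hν : 0 ≤ ν)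
    (hv : ∀ γ ∈ l, ‖1 - γ v‖ ≤ ν) : ‖1 - ψ v‖ ≤ l.length * ν := by
  induction l generalizing ψ with
  | nil => simp only [Sp] at h; subst h; simp
  | cons γ l ih =>
    have hl : ∀ γ ∈ l, ‖1 - γ v‖ ≤ ν := fun δ hδ => hv δ (List.mem_cons_of_mem _ hδ)
    have hγ := hv γ (List.mem_cons_self)
    have mulb : ∀ a b : ℂ, ‖a‖ = 1 → ‖1 - a * b‖ ≤ ‖1 - a‖ + ‖1 - b‖ := by
      intro a b ha
      have : 1 - a * b = (1 - a) + a * (1 - b) := by ring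
      rw [this]
      refine (norm_add_le _ _).trans ?_
      rw [norm_mul, ha, one_mul]
    rw [List.length_cons]; push_cast
    rcases h with h | ⟨φ, h, rfl⟩ | ⟨φ, h, rfl⟩
    · have := ih h hl; linarith
    · have h1 := ih h hl
      have h2 := mulb (γ v) (φ v) (AddChar.norm_apply _ _)
      rw [AddChar.mul_apply]
      linarith
    · have h1 := ih h hl
      have h2 := mulb (γ (-v)) (φ v) (AddChar.norm_apply _ _)
      rw [norm_one_sub_neg] at h2
      rw [AddChar.mul_apply, AddChar.inv_apply]
      linarith

/-- Riesz product -/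
noncomputable def riesz (w : AddChar G ℂ → ℂ) : List (AddChar G ℂ) → G → ℝ
  | [], _ => 1
  | γ :: l, x => (1 + (w γ * γ x).re / 4) * riesz w l x

lemma re_eq (w : ℂ) (γ : AddChar G ℂ) (x : G) :
    (((w * γ x).re : ℝ) : ℂ) = (w * γ x + (starRingEnd ℂ) w * γ⁻¹ x) / 2 := by
  rw [Complex.re_eq_add_conj, map_mul, AddChar.inv_apply, AddChar.map_neg_eq_conj]

lemma riesz_cons (w : AddChar G ℂ → ℂ) (γ : AddChar G ℂ) (l : List (AddChar G ℂ))
    (χ : AddChar G ℂ) :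
    (fun x => (riesz w (γ :: l) x : ℂ) * χ x) = (fun x => (riesz w l x : ℂ) * χ x) +
      ((w γ / 8) • (fun x => (riesz w l x : ℂ) * (γ * χ) x) +
       ((starRingEnd ℂ) (w γ) / 8) • (fun x => (riesz w l x : ℂ) * (γ⁻¹ * χ) x)) := by
  funext x
  simp only [riesz, Pi.add_apply, Pi.smul_apply, smul_eq_mul, AddChar.mul_apply]
  push_cast
  rw [re_eq]
  ring

lemma riesz_bound (E : (G → ℂ) →ₗ[ℂ] ℂ) (w : AddChar G ℂ → ℂ) (hw : ∀ γ, ‖w γ‖ ≤ 1)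
    (l : List (AddChar G ℂ)) (q : ℝ) (χ : AddChar G ℂ)
    (h : ∀ ψ, Sp l ψ → ‖E (fun x => (ψ * χ) x)‖ ≤ q) :
    ‖E (fun x => (riesz w l x : ℂ) * χ x)‖ ≤ (5 / 4) ^ l.length * q := by
  induction l generalizing χ with
  | nil =>
    have := h 1 rfl
    simpa [riesz] using this
  | cons γ l ih =>
    rw [riesz_cons, map_add, map_add, map_smul, map_smul]
    have h0 := ih χ (fun ψ hψ => h ψ (Or.inl hψ))
    have h1 := ih (γ * χ) (fun ψ hψ => by
      have := h (γ * ψ) (Or.inr (Or.inl ⟨ψ, hψ, rfl⟩))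
      rwa [show γ * ψ * χ = ψ * (γ * χ) by rw [mul_comm γ ψ, mul_assoc]] at this)
    have h2 := ih (γ⁻¹ * χ) (fun ψ hψ => by
      have := h (γ⁻¹ * ψ) (Or.inr (Or.inr ⟨ψ, hψ, rfl⟩))
      rwa [show γ⁻¹ * ψ * χ = ψ * (γ⁻¹ * χ) by rw [mul_comm γ⁻¹ ψ, mul_assoc]] at this)
    have hwn : ‖w γ / 8‖ ≤ 1 / 8 := by
      rw [norm_div]; norm_num; have := hw γ; linarith
    have hwn' : ‖(starRingEnd ℂ) (w γ) / 8‖ ≤ 1 / 8 := by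
      rw [norm_div, RCLike.norm_conj]; norm_num; have := hw γ; linarith
    refine (norm_add_le _ _).trans ?_
    refine (add_le_add le_rfl (norm_add_le _ _)).trans ?_
    rw [norm_smul, norm_smul]
    have k1 := mul_le_mul hwn h1 (norm_nonneg _) (by norm_num)
    have k2 := mul_le_mul hwn' h2 (norm_nonneg _) (by norm_num)
    rw [List.length_cons, pow_succ]
    linarith

/-- relative dissociativity -/
def Diss (Δ : AddChar G ℂ → Prop) : List (AddChar G ℂ) → Prop
  | [] => True
  | γ :: l => Diss Δ l ∧ ∀ ψ, Sp l ψ → ¬ Δ (γ * ψ) ∧ ¬ Δ (γ⁻¹ * ψ)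

lemma riesz_diss (E : (G → ℂ) →ₗ[ℂ] ℂ) (w : AddChar G ℂ → ℂ) (hw : ∀ γ, ‖w γ‖ ≤ 1)
    (Δ : AddChar G ℂ → Prop) (q : ℝ) (h1 : ‖E (fun _ => 1)‖ ≤ 1)
    (hΔ : ∀ χ, ¬ Δ χ → ‖E (fun x => χ x)‖ ≤ q)
    (l : List (AddChar G ℂ)) (hl : Diss Δ l) :
    ‖E (fun x => (riesz w l x : ℂ))‖ ≤ 1 + ((5 / 4) ^ l.length - 1) * q := by
  induction l with
  | nil => simpa [riesz] using h1
  | cons γ l ih =>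
    have e := riesz_cons w γ l 1
    simp only [AddChar.one_apply, mul_one] at e
    rw [e, map_add, map_add, map_smul, map_smul]
    have h0 := ih hl.1
    have h1 := riesz_bound E w hw l q γ (fun ψ hψ => by
      rw [mul_comm ψ γ]; exact hΔ _ (hl.2 ψ hψ).1)
    have h2 := riesz_bound E w hw l q γ⁻¹ (fun ψ hψ => by
      rw [mul_comm ψ γ⁻¹]; exact hΔ _ (hl.2 ψ hψ).2)
    have hwn : ‖w γ / 8‖ ≤ 1 / 8 := by
      rw [norm_div]; norm_num; have := hw γ; linarith
    have hwn' : ‖(starRingEnd ℂ) (w γ) / 8‖ ≤ 1 / 8 := by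
      rw [norm_div, RCLike.norm_conj]; norm_num; have := hw γ; linarith
    refine (norm_add_le _ _).trans ?_
    refine (add_le_add le_rfl (norm_add_le _ _)).trans ?_
    rw [norm_smul, norm_smul]
    have k1 := mul_le_mul hwn h1 (norm_nonneg _) (by norm_num)
    have k2 := mul_le_mul hwn' h2 (norm_nonneg _) (by norm_num)
    rw [List.length_cons, pow_succ]
    linarith

lemma one_add_ge {y : ℝ} (hy : |y| ≤ 1 / 4) : Real.exp (y - 1 / 12) ≤ 1 + y := by
  rw [abs_le] at hy
  have hpos : 0 < 1 + y := by linarith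
  rw [← Real.le_log_iff_exp_le hpos]
  have := Real.one_sub_inv_le_log_of_pos hpos
  refine le_trans ?_ this
  have e : 1 - (1 + y)⁻¹ = y / (1 + y) := by field_simp; ring
  rw [e, le_div_iff₀ hpos]
  nlinarith

lemma riesz_ge (w : AddChar G ℂ → ℂ) (hw : ∀ γ, ‖w γ‖ ≤ 1) (l : List (AddChar G ℂ)) (x : G) :
    Real.exp ((l.map (fun γ => (w γ * γ x).re / 4 - 1 / 12)).sum) ≤ riesz w l x := by
  induction l with
  | nil => simp [riesz]
  | cons γ l ih =>
    simp only [List.map_cons, List.sum_cons, riesz, Real.exp_add]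
    have : |(w γ * γ x).re / 4| ≤ 1 / 4 := by
      rw [abs_div, abs_of_pos (by norm_num : (4:ℝ) > 0)]
      have h := Complex.abs_re_le_norm (w γ * γ x)
      rw [norm_mul, AddChar.norm_apply, mul_one] at h
      have := hw γ
      linarith
    have h1 := one_add_ge this
    exact mul_le_mul h1 ih (Real.exp_pos _).le (by have := Real.exp_pos ((w γ * γ x).re / 4 - 1 / 12); linarith)

lemma riesz_avg_ge (S : Finset G) (hS : S.Nonempty) (l : List (AddChar G ℂ))
    (hl : ∀ γ ∈ l, 1 / 2 ≤ ‖ft S γ‖) :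
    ∃ w : AddChar G ℂ → ℂ, (∀ γ, ‖w γ‖ ≤ 1) ∧
      S.card * Real.exp (l.length / 24) ≤ ∑ s ∈ S, riesz w l s := by
  have hc : (0 : ℝ) < S.card := by exact_mod_cast hS.card_pos
  let w : AddChar G ℂ → ℂ := fun γ => (starRingEnd ℂ) (ft S γ) / ‖ft S γ‖
  have hw : ∀ γ, ‖w γ‖ ≤ 1 := by
    intro γ
    simp only [w, norm_div, RCLike.norm_conj, Complex.norm_real, norm_norm]
    exact div_self_le_one _
  have hre : ∀ γ, ∑ s ∈ S, (w γ * γ s).re = S.card * ‖ft S γ‖ := by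
    intro γ
    rw [← Complex.re_sum, ← Finset.mul_sum]
    have e : ∑ s ∈ S, γ s = S.card * ft S γ := by
      have hcc : (S.card : ℂ) ≠ 0 := by exact_mod_cast hc.ne'
      unfold ft; rw [mul_div_cancel₀ _ hcc]
    rw [e]
    simp only [w]
    by_cases h0 : ft S γ = 0
    · simp [h0]
    have hn : (‖ft S γ‖ : ℂ) ≠ 0 := by simpa using h0
    have : (starRingEnd ℂ) (ft S γ) / ‖ft S γ‖ * (S.card * ft S γ) =
        ((S.card * ‖ft S γ‖ : ℝ) : ℂ) := by
      have h3 : (starRingEnd ℂ) (ft S γ) * ft S γ = ‖ft S γ‖ ^ 2 := Complex.conj_mul' _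
      rw [div_mul_eq_mul_div, div_eq_iff hn]
      push_cast
      linear_combination (S.card : ℂ) * h3
    rw [this, Complex.ofReal_re]
  refine ⟨w, hw, ?_⟩
  have hsum : ∀ l : List (AddChar G ℂ), (∀ γ ∈ l, 1 / 2 ≤ ‖ft S γ‖) →
      S.card * ((l.length : ℝ) / 24) ≤
        ∑ s ∈ S, (l.map (fun γ => (w γ * γ s).re / 4 - 1 / 12)).sum := by
    intro l hl
    induction l with
    | nil => simp
    | cons γ l ih =>
      have h1 := ih (fun δ hδ => hl δ (List.mem_cons_of_mem _ hδ))
      have h2 := hl γ List.mem_cons_self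
      simp only [List.map_cons, List.sum_cons, Finset.sum_add_distrib, Finset.sum_sub_distrib,
        ← Finset.sum_div, hre, Finset.sum_const, nsmul_eq_mul, List.length_cons]
      push_cast
      nlinarith
  have hj := convexOn_exp.map_sum_le (t := S) (w := fun _ => (S.card : ℝ)⁻¹)
    (p := fun s => (l.map (fun γ => (w γ * γ s).re / 4 - 1 / 12)).sum)
    (fun _ _ => by positivity) (by simp [hc.ne']) (fun _ _ => Set.mem_univ _)
  simp only [smul_eq_mul, ← Finset.mul_sum] at hj
  have h3 : Real.exp (l.length / 24) ≤ (S.card : ℝ)⁻¹ * ∑ s ∈ S, riesz w l s := by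
    refine le_trans ?_ (hj.trans ?_)
    · apply Real.exp_le_exp.mpr
      rw [inv_mul_eq_div, le_div_iff₀ hc]
      have := hsum l hl
      linarith
    · gcongr with s hs
      exact riesz_ge w hw l s
  rw [inv_mul_eq_div, le_div_iff₀ hc] at h3
  linarith

lemma riesz_nonneg (w : AddChar G ℂ → ℂ) (hw : ∀ γ, ‖w γ‖ ≤ 1) (l : List (AddChar G ℂ)) (x : G) :
    0 ≤ riesz w l x := (Real.exp_pos _).le.trans (riesz_ge w hw l x)

/-- averaging functional -/
noncomputable def avgE (B U : Finset G) (ℓ : ℕ) : (G → ℂ) →ₗ[ℂ] ℂ where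
  toFun f := (∑ b ∈ B, ∑ u ∈ Fintype.piFinset (fun _ : Fin ℓ => U), f (b + ∑ i, u i)) /
    (B.card * U.card ^ ℓ)
  map_add' f g := by simp [Finset.sum_add_distrib, add_div]
  map_smul' c f := by simp [← Finset.mul_sum, mul_div_assoc]

lemma char_sum (χ : AddChar G ℂ) {ι : Type*} (s : Finset ι) (f : ι → G) :
    χ (∑ i ∈ s, f i) = ∏ i ∈ s, χ (f i) := by
  classical
  induction s using Finset.induction_on with
  | empty => simp
  | insert a s ha ih => rw [sum_insert ha, prod_insert ha, AddChar.map_add_eq_mul, ih]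

lemma avgE_char (B U : Finset G) (ℓ : ℕ) (χ : AddChar G ℂ) :
    avgE B U ℓ (fun x => χ x) = ft B χ * (ft U χ) ^ ℓ := by
  simp only [avgE, LinearMap.coe_mk, AddHom.coe_mk, AddChar.map_add_eq_mul, char_sum,
    ← Finset.mul_sum, Finset.sum_prod_piFinset, Finset.prod_const, Finset.card_univ,
    Fintype.card_fin, ← Finset.sum_mul, ft, div_pow]
  rw [div_mul_div_comm]

lemma bohr_sum {Γ : Finset (AddChar G ℂ)} {ρ : ℝ} (hρ : 0 ≤ ρ) {ι : Type*} (s : Finset ι)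
    (f : ι → G) (h : ∀ i ∈ s, f i ∈ bohr Γ ρ) : ∑ i ∈ s, f i ∈ bohr Γ (s.card * ρ) := by
  classical
  induction s using Finset.induction_on with
  | empty => simpa using zero_mem_bohr (Γ := Γ) (le_refl 0)
  | insert a s ha ih =>
    rw [sum_insert ha, card_insert_of_notMem ha]
    refine bohr_add (h a (mem_insert_self _ _)) (ih fun i hi => h i (mem_insert_of_mem hi)) ?_
    push_cast; linarith

lemma chang (Γ : Finset (AddChar G ℂ)) {ρ ρp ρU : ℝ} (hρU : 0 ≤ ρU) (ℓ : ℕ)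
    (hρp : ρ + ℓ * ρU ≤ ρp) (hρ : 0 ≤ ρ)
    (S : Finset G) (hS : S.Nonempty) (hSB : S ⊆ bohr Γ ρ)
    (hcard : 2 * ((bohr Γ ρp).card : ℝ) < S.card * Real.exp (ℓ / 24)) :
    ∃ l : List (AddChar G ℂ), l.length ≤ ℓ ∧ ∀ γ : AddChar G ℂ, 1 / 2 ≤ ‖ft S γ‖ →
      ∃ ψ, Sp l ψ ∧ (1 / 2 ≤ ‖ft (bohr Γ ρU) (γ * ψ)‖ ∨ 1 / 2 ≤ ‖ft (bohr Γ ρU) (γ⁻¹ * ψ)‖) := by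
  set U := bohr Γ ρU with hU
  set B := bohr Γ ρp with hB
  let Δ : AddChar G ℂ → Prop := fun χ => 1 / 2 ≤ ‖ft U χ‖
  have hBpos : (0 : ℝ) < B.card := bohr_card_pos (by have : 0 ≤ (ℓ : ℝ) * ρU := by positivity
                                                     linarith)
  have hUpos : (0 : ℝ) < U.card := bohr_card_pos hρU
  by_contra! hcon
  have hlist : ∀ n ≤ ℓ, ∃ l : List (AddChar G ℂ), l.length = n ∧ (∀ γ ∈ l, 1 / 2 ≤ ‖ft S γ‖) ∧
      Diss Δ l := by
    intro n
    induction n with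
    | zero => intro _; exact ⟨[], rfl, by simp, trivial⟩
    | succ n ih =>
      intro hn
      obtain ⟨l, hl1, hl2, hl3⟩ := ih (by omega)
      obtain ⟨γ, hγ, h⟩ := hcon l (by omega)
      refine ⟨γ :: l, by simp [hl1], ?_, hl3, fun ψ hψ => ?_⟩
      · intro δ hδ
        rcases List.mem_cons.mp hδ with rfl | hδ
        · exact hγ
        · exact hl2 δ hδ
      · have := h ψ hψ
        exact ⟨not_le.mpr this.1, not_le.mpr this.2⟩
  obtain ⟨l, hl1, hl2, hl3⟩ := hlist ℓ le_rfl
  obtain ⟨w, hw, hwS⟩ := riesz_avg_ge S hS l hl2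
  have hE := riesz_diss (avgE B U ℓ) w hw Δ ((1 / 2) ^ ℓ) (by
      have := avgE_char B U ℓ 1
      simp only [AddChar.one_apply] at this
      rw [this, norm_mul, norm_pow]
      exact mul_le_one₀ (norm_ft_le_one _ _) (by positivity)
        (pow_le_one₀ (norm_nonneg _) (norm_ft_le_one _ _))) (by
      intro χ hχ
      rw [avgE_char, norm_mul, norm_pow]
      have h1 : ‖ft U χ‖ ≤ 1 / 2 := (not_le.mp hχ).le
      calc _ ≤ 1 * (1 / 2 : ℝ) ^ ℓ := by
            gcongr
            exact norm_ft_le_one _ _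
        _ = _ := one_mul _) l hl3
  have hE2 : ‖avgE B U ℓ (fun x => (riesz w l x : ℂ))‖ ≤ 2 := by
    refine hE.trans ?_
    rw [hl1]
    have h1 : ((5 / 4 : ℝ) ^ ℓ - 1) * (1 / 2) ^ ℓ ≤ (5 / 4) ^ ℓ * (1 / 2) ^ ℓ := by
      gcongr; linarith
    have h2 : (5 / 4 : ℝ) ^ ℓ * (1 / 2) ^ ℓ ≤ 1 := by
      rw [← mul_pow]; exact pow_le_one₀ (by norm_num) (by norm_num)
    linarith
  have hlow : ∑ s ∈ S, riesz w l s ≤ 2 * B.card := by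
    have hu : ∀ u ∈ Fintype.piFinset (fun _ : Fin ℓ => U),
        ∑ s ∈ S, riesz w l s ≤ ∑ b ∈ B, riesz w l (b + ∑ i, u i) := by
      intro u hu
      rw [Fintype.mem_piFinset] at hu
      have hus : ∑ i, u i ∈ bohr Γ (ℓ * ρU) := by
        have := bohr_sum (Γ := Γ) hρU (univ : Finset (Fin ℓ)) u (fun i _ => hu i)
        simpa using this
      have e : ∑ s ∈ S, riesz w l s =
          ∑ b ∈ S.image (fun s => s - ∑ i, u i), riesz w l (b + ∑ i, u i) := by
        rw [Finset.sum_image (fun a _ b _ h => sub_left_injective h)]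
        simp
      rw [e]
      apply Finset.sum_le_sum_of_subset_of_nonneg
      · intro b hb
        obtain ⟨s, hs, rfl⟩ := mem_image.mp hb
        exact bohr_sub (hSB hs) hus hρp
      · intro b _ _; exact riesz_nonneg w hw l _
    have htot : (U.card : ℝ) ^ ℓ * ∑ s ∈ S, riesz w l s ≤
        ∑ b ∈ B, ∑ u ∈ Fintype.piFinset (fun _ : Fin ℓ => U), riesz w l (b + ∑ i, u i) := by
      rw [Finset.sum_comm]
      have := Finset.card_nsmul_le_sum _ _ _ hu
      rw [Fintype.card_piFinset] at this
      simpa using this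
    have hval : avgE B U ℓ (fun x => (riesz w l x : ℂ)) = (((∑ b ∈ B,
        ∑ u ∈ Fintype.piFinset (fun _ : Fin ℓ => U), riesz w l (b + ∑ i, u i)) /
        (B.card * U.card ^ ℓ) : ℝ) : ℂ) := by
      simp [avgE]
    rw [hval, Complex.norm_real, Real.norm_eq_abs] at hE2
    have h3 := (le_abs_self _).trans hE2
    rw [div_le_iff₀ (by positivity)] at h3
    have h4 : (U.card : ℝ) ^ ℓ * ∑ s ∈ S, riesz w l s ≤ (U.card : ℝ) ^ ℓ * (2 * B.card) := by
      linarith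
    exact le_of_mul_le_mul_left h4 (by positivity)
  rw [hl1] at hwS
  linarith

end VC


namespace VC

open Finset

set_option linter.unusedSectionVars false
set_option linter.unusedVariables false

variable {G : Type*} [AddCommGroup G] [Fintype G] [DecidableEq G]

lemma chernoff_side (A : Finset G) (hA : A.Nonempty) (X : G → ℝ) (hX : ∀ a, X a = 0 ∨ X a = 1)
    (p : ℝ) (hp : p = (∑ a ∈ A, X a) / A.card) (m : ℕ) {δ α ε : ℝ} (hδ : 0 < δ) (hδ1 : δ ≤ 1)
    (hα : 0 ≤ α) (hε : ε = 1 ∨ ε = -1) :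
    (((Fintype.piFinset (fun _ : Fin m => A)).filter
      (fun a => δ * (p + α) * m < ε * (∑ i, X (a i) - m * p))).card : ℝ) ≤
      Real.exp (-(m * α * δ ^ 2 / 4)) * (A.card : ℝ) ^ m := by
  have hc : (0 : ℝ) < A.card := by exact_mod_cast hA.card_pos
  have hp0 : 0 ≤ p := by
    rw [hp]; apply div_nonneg _ hc.le
    apply Finset.sum_nonneg; intro a _; rcases hX a with h | h <;> rw [h]; norm_num
  set lam : ℝ := ε * δ / 2 with hlam
  have hl2 : lam ^ 2 = δ ^ 2 / 4 := by rcases hε with h | h <;> rw [hlam, h] <;> ring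
  have hl1 : |lam| ≤ 1 := by
    rw [← sq_le_one_iff_abs_le_one, hl2]; nlinarith
  have hexp : ∀ a, Real.exp (lam * X a) ≤ 1 + X a * (lam + lam ^ 2) := by
    intro a
    rcases hX a with h | h
    · simp [h]
    · rw [h, mul_one]
      have := Real.abs_exp_sub_one_sub_id_le hl1
      have := (abs_le.mp this).2
      linarith
  have hsum : ∑ a ∈ A, Real.exp (lam * X a) ≤ A.card * Real.exp (p * (lam + lam ^ 2)) := by
    calc _ ≤ ∑ a ∈ A, (1 + X a * (lam + lam ^ 2)) := Finset.sum_le_sum fun a _ => hexp a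
      _ = A.card * (1 + p * (lam + lam ^ 2)) := by
        rw [Finset.sum_add_distrib, ← Finset.sum_mul, hp]; simp; field_simp
      _ ≤ _ := by
        gcongr
        have := Real.add_one_le_exp (p * (lam + lam ^ 2))
        linarith
  have htot : ∑ a ∈ Fintype.piFinset (fun _ : Fin m => A), Real.exp (lam * ∑ i, X (a i)) ≤
      (A.card : ℝ) ^ m * Real.exp (m * (p * (lam + lam ^ 2))) := by
    have e : ∀ a : Fin m → G, Real.exp (lam * ∑ i, X (a i)) = ∏ i, Real.exp (lam * X (a i)) := by
      intro a; rw [Finset.mul_sum, Real.exp_sum]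
    simp only [e]
    rw [Finset.sum_prod_piFinset A (fun (_ : Fin m) a => Real.exp (lam * X a))]
    simp only [Finset.prod_const, Finset.card_univ, Fintype.card_fin]
    rw [Real.exp_nat_mul, ← mul_pow]
    exact pow_le_pow_left₀ (Finset.sum_nonneg fun _ _ => (Real.exp_pos _).le) hsum m
  set Bd := (Fintype.piFinset (fun _ : Fin m => A)).filter
      (fun a => δ * (p + α) * m < ε * (∑ i, X (a i) - m * p)) with hBd
  have hlow : (Bd.card : ℝ) * Real.exp (lam * m * p + δ ^ 2 / 2 * (p + α) * m) ≤
      ∑ a ∈ Fintype.piFinset (fun _ : Fin m => A), Real.exp (lam * ∑ i, X (a i)) := by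
    calc _ = ∑ a ∈ Bd, Real.exp (lam * m * p + δ ^ 2 / 2 * (p + α) * m) := by simp
      _ ≤ ∑ a ∈ Bd, Real.exp (lam * ∑ i, X (a i)) := by
        apply Finset.sum_le_sum
        intro a ha
        apply Real.exp_le_exp.mpr
        have := (mem_filter.mp ha).2
        have h2 : δ / 2 * (δ * (p + α) * m) ≤ δ / 2 * (ε * (∑ i, X (a i) - m * p)) := by
          gcongr
        rw [hlam]
        nlinarith
      _ ≤ _ := Finset.sum_le_sum_of_subset_of_nonneg (filter_subset _ _)
        (fun _ _ _ => (Real.exp_pos _).le)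
  have hfin := hlow.trans htot
  have hE := Real.exp_pos (lam * m * p + δ ^ 2 / 2 * (p + α) * m)
  rw [← le_div_iff₀ hE] at hfin
  refine hfin.trans ?_
  rw [mul_div_assoc, ← Real.exp_sub, mul_comm]
  gcongr
  rw [hl2]
  have : 0 ≤ (m : ℝ) * p * δ ^ 2 := by positivity
  have : 0 ≤ (m : ℝ) * α * δ ^ 2 := by positivity
  nlinarith

lemma chernoff (A : Finset G) (hA : A.Nonempty) (X : G → ℝ) (hX : ∀ a, X a = 0 ∨ X a = 1)
    (p : ℝ) (hp : p = (∑ a ∈ A, X a) / A.card) (m : ℕ) {δ α : ℝ} (hδ : 0 < δ) (hδ1 : δ ≤ 1)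
    (hα : 0 ≤ α) :
    (((Fintype.piFinset (fun _ : Fin m => A)).filter
      (fun a => δ * (p + α) * m < |∑ i, X (a i) - m * p|)).card : ℝ) ≤
      2 * Real.exp (-(m * α * δ ^ 2 / 4)) * (A.card : ℝ) ^ m := by
  classical
  have h1 := chernoff_side A hA X hX p hp m hδ hδ1 hα (Or.inl rfl)
  have h2 := chernoff_side A hA X hX p hp m hδ hδ1 hα (Or.inr rfl)
  have hsub : (Fintype.piFinset (fun _ : Fin m => A)).filter
      (fun a => δ * (p + α) * m < |∑ i, X (a i) - m * p|) ⊆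
      (Fintype.piFinset (fun _ : Fin m => A)).filter
      (fun a => δ * (p + α) * m < 1 * (∑ i, X (a i) - m * p)) ∪
      (Fintype.piFinset (fun _ : Fin m => A)).filter
      (fun a => δ * (p + α) * m < (-1) * (∑ i, X (a i) - m * p)) := by
    intro a ha
    rw [mem_filter] at ha
    rw [mem_union, mem_filter, mem_filter]
    rcases lt_abs.mp ha.2 with h | h
    · left; exact ⟨ha.1, by linarith⟩
    · right; exact ⟨ha.1, by linarith⟩
  have h3 := (Finset.card_le_card hsub).trans (Finset.card_union_le _ _)
  have h3' : (((Fintype.piFinset (fun _ : Fin m => A)).filter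
      (fun a => δ * (p + α) * m < |∑ i, X (a i) - m * p|)).card : ℝ) ≤ _ := Nat.cast_le.mpr h3
  push_cast at h3'
  linarith

/-- normalised representation count of `2x` -/
noncomputable def FF (A : Finset G) (x : G) : ℝ :=
  ((A.filter (fun a => x + x - a ∈ A)).card : ℝ) / A.card

lemma FF_nonneg (A : Finset G) (x : G) : 0 ≤ FF A x := by unfold FF; positivity

lemma FF_le_one (A : Finset G) (x : G) : FF A x ≤ 1 := by
  unfold FF
  apply div_le_one_of_le₀ _ (by positivity)
  exact_mod_cast Finset.card_le_card (filter_subset _ _)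

lemma croot_sisask (A Z B R : Finset G) (hA : A.Nonempty) (hB : B.Nonempty)
    (hR : ∀ a ∈ A, ∀ s ∈ B, a + (s + s) ∈ R)
    {m : ℕ} (hm : 0 < m) {δ α β : ℝ} (hδ : 0 < δ) (hδ1 : δ ≤ 1) (hα : 0 ≤ α)
    (hβ : 2 * Real.exp (-(m * α * δ ^ 2 / 4)) ≤ β) (hβ0 : 0 < β) :
    ∃ S ⊆ B, (B.card : ℝ) * (A.card : ℝ) ^ m ≤ 2 * S.card * (R.card : ℝ) ^ m ∧
      ∀ s ∈ S, ∀ s' ∈ S, ∃ E : Finset G, (E.card : ℝ) ≤ 4 * β * Z.card ∧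
        ∀ x ∈ Z, x + (s - s') ∈ Z → x ∉ E →
          (1 - δ) * (FF A (x + (s - s')) + α) ≤ (1 + δ) * (FF A x + α) := by
  classical
  have hc : (0 : ℝ) < A.card := by exact_mod_cast hA.card_pos
  have hm' : (0 : ℝ) < m := by exact_mod_cast hm
  let X : G → G → ℝ := fun x a => if x + x - a ∈ A then 1 else 0
  let Q := Fintype.piFinset (fun _ : Fin m => A)
  let bad : (Fin m → G) → G → Prop := fun a x =>
    δ * (FF A x + α) * m < |∑ i, X x (a i) - m * FF A x|
  have hQ : (Q.card : ℝ) = (A.card : ℝ) ^ m := by simp [Q, Fintype.card_piFinset]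
  have hbad : ∀ x, ((Q.filter (fun a => bad a x)).card : ℝ) ≤ β * (A.card : ℝ) ^ m := by
    intro x
    refine (chernoff A hA (X x) (fun a => by simp only [X]; split_ifs <;> simp) (FF A x)
      (by simp [FF, X]) m hδ hδ1 hα).trans ?_
    gcongr
  -- good tuples
  let Lg := Q.filter (fun a => ((Z.filter (fun x => bad a x)).card : ℝ) ≤ 2 * β * Z.card)
  have hswap : ∑ a ∈ Q, ((Z.filter (fun x => bad a x)).card : ℝ) ≤
      β * (A.card : ℝ) ^ m * Z.card := by
    have e : ∑ a ∈ Q, ((Z.filter (fun x => bad a x)).card : ℝ) =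
        ∑ x ∈ Z, ((Q.filter (fun a => bad a x)).card : ℝ) := by
      have h1 : ∀ a, ((Z.filter (fun x => bad a x)).card : ℝ) =
          ∑ x ∈ Z, if bad a x then (1 : ℝ) else 0 := by intro a; simp
      have h2 : ∀ x, ((Q.filter (fun a => bad a x)).card : ℝ) =
          ∑ a ∈ Q, if bad a x then (1 : ℝ) else 0 := by intro a; simp
      simp only [h1, h2]
      exact Finset.sum_comm
    rw [e]
    refine (Finset.sum_le_sum fun x _ => hbad x).trans ?_
    rw [Finset.sum_const, nsmul_eq_mul]; linarith
  have hLg : (A.card : ℝ) ^ m ≤ 2 * Lg.card := by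
    by_cases hZ : Z.card = 0
    · have : Lg = Q := by
        apply Finset.filter_true_of_mem
        intro a _
        rw [Finset.card_eq_zero] at hZ
        simp [hZ]
      rw [this, hQ]
      have : 0 < (A.card : ℝ) ^ m := by positivity
      linarith
    have hZ' : (0 : ℝ) < Z.card := by exact_mod_cast Nat.pos_of_ne_zero hZ
    have hcompl : (Lg.card : ℝ) +
        ((Q.filter (fun a => ¬ ((Z.filter (fun x => bad a x)).card : ℝ) ≤ 2 * β * Z.card)).card : ℝ) =
        Q.card := by
      exact_mod_cast Finset.card_filter_add_card_filter_not _
    set Cm := Q.filter (fun a => ¬ ((Z.filter (fun x => bad a x)).card : ℝ) ≤ 2 * β * Z.card)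
    have h1 : (Cm.card : ℝ) * (2 * β * Z.card) ≤ β * (A.card : ℝ) ^ m * Z.card := by
      refine le_trans ?_ hswap
      calc (Cm.card : ℝ) * (2 * β * Z.card) = ∑ a ∈ Cm, (2 * β * Z.card) := by simp
        _ ≤ ∑ a ∈ Cm, ((Z.filter (fun x => bad a x)).card : ℝ) := by
          apply Finset.sum_le_sum
          intro a ha
          exact (not_le.mp (mem_filter.mp ha).2).le
        _ ≤ _ := Finset.sum_le_sum_of_subset_of_nonneg (filter_subset _ _)
          (fun _ _ _ => by positivity)
    have h2 : 2 * (Cm.card : ℝ) ≤ (A.card : ℝ) ^ m := by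
      have : (2 * (Cm.card : ℝ)) * (β * Z.card) ≤ (A.card : ℝ) ^ m * (β * Z.card) := by linarith
      exact le_of_mul_le_mul_right this (by positivity)
    linarith
  -- pigeonhole over translates
  let QR := Fintype.piFinset (fun _ : Fin m => R)
  let Su : (Fin m → G) → Finset G := fun u => B.filter (fun s => (fun i => u i - (s + s)) ∈ Lg)
  have hcount : (B.card : ℝ) * Lg.card ≤ ∑ u ∈ QR, ((Su u).card : ℝ) := by
    have h1 : ∀ u, ((Su u).card : ℝ) =
        ∑ s ∈ B, if (fun i => u i - (s + s)) ∈ Lg then (1 : ℝ) else 0 := by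
      intro u; simp [Su]
    simp only [h1]
    rw [Finset.sum_comm]
    have : ∀ s ∈ B, (Lg.card : ℝ) ≤
        ∑ u ∈ QR, if (fun i => u i - (s + s)) ∈ Lg then (1 : ℝ) else 0 := by
      intro s hs
      rw [Finset.sum_boole]
      have : Lg.card ≤ (QR.filter (fun u => (fun i => u i - (s + s)) ∈ Lg)).card := by
        refine Finset.card_le_card_of_injOn (fun a i => a i + (s + s)) ?_ ?_
        · intro a ha
          rw [mem_coe] at ha
          simp only [mem_coe, mem_filter, QR, Fintype.mem_piFinset]
          have haQ := Fintype.mem_piFinset.mp (mem_filter.mp ha).1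
          refine ⟨fun i => hR _ (haQ i) s hs, ?_⟩
          simpa using ha
        · intro a _ b _ h
          funext i
          have := congrFun h i
          simpa using this
      exact_mod_cast this
    have := Finset.card_nsmul_le_sum _ _ _ this
    simpa using this
  have hQR : (QR.card : ℝ) = (R.card : ℝ) ^ m := by simp [QR, Fintype.card_piFinset]
  have hRne : (0 : ℝ) < R.card := by
    obtain ⟨a, ha⟩ := hA
    obtain ⟨s, hs⟩ := hB
    exact_mod_cast Finset.card_pos.mpr ⟨_, hR a ha s hs⟩
  have hQRne : QR.Nonempty := by
    rw [← Finset.card_pos]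
    have : (0 : ℝ) < QR.card := by rw [hQR]; positivity
    exact_mod_cast this
  obtain ⟨u, hu, hule⟩ := Finset.exists_le_of_sum_le (s := QR)
    (f := fun _ => (B.card : ℝ) * Lg.card / QR.card) (g := fun u => ((Su u).card : ℝ)) hQRne (by
      rw [Finset.sum_const, nsmul_eq_mul, mul_div_cancel₀]
      · exact hcount
      · rw [hQR]; positivity)
  refine ⟨Su u, filter_subset _ _, ?_, ?_⟩
  · rw [div_le_iff₀ (by rw [hQR]; positivity), hQR] at hule
    have : (B.card : ℝ) * (A.card : ℝ) ^ m ≤ B.card * (2 * Lg.card) := by gcongr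
    linarith
  · intro s hs s' hs'
    have hsL := (mem_filter.mp hs).2
    have hsL' := (mem_filter.mp hs').2
    set as : Fin m → G := fun i => u i - (s + s) with has
    set as' : Fin m → G := fun i => u i - (s' + s') with has'
    refine ⟨Z.filter (fun x => bad as x) ∪
      (Z.filter (fun x => bad as' x)).image (fun x => x - (s - s')), ?_, ?_⟩
    · have h1 := (mem_filter.mp hsL).2
      have h2 := (mem_filter.mp hsL').2
      have h3 := Finset.card_union_le (Z.filter (fun x => bad as x))
        ((Z.filter (fun x => bad as' x)).image (fun x => x - (s - s')))
      have h4 := Finset.card_image_le (s := Z.filter (fun x => bad as' x))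
        (f := fun x => x - (s - s'))
      have h5 : ((Z.filter (fun x => bad as x) ∪
        (Z.filter (fun x => bad as' x)).image (fun x => x - (s - s'))).card : ℝ) ≤
        (Z.filter (fun x => bad as x)).card + (Z.filter (fun x => bad as' x)).card := by
        exact_mod_cast h3.trans (by omega)
      linarith
    · intro x hx hxt hxE
      rw [mem_union, not_or] at hxE
      have g1 : ¬ bad as x := fun h => hxE.1 (mem_filter.mpr ⟨hx, h⟩)
      have g2 : ¬ bad as' (x + (s - s')) := fun h => hxE.2
        (mem_image.mpr ⟨_, mem_filter.mpr ⟨hxt, h⟩, by abel⟩)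
      have e : ∑ i, X x (as i) = ∑ i, X (x + (s - s')) (as' i) := by
        apply Finset.sum_congr rfl
        intro i _
        simp only [X, has, has']
        have : x + x - (u i - (s + s)) = x + (s - s') + (x + (s - s')) - (u i - (s' + s')) := by abel
        rw [this]
      simp only [bad, not_lt] at g1 g2
      rw [← e] at g2
      have k1 := (abs_le.mp g1).2
      have k2 := (abs_le.mp g2).1
      have : m * ((1 - δ) * (FF A (x + (s - s')) + α)) ≤ m * ((1 + δ) * (FF A x + α)) := by
        linarith
      exact le_of_mul_le_mul_left this hm'

end VC


namespace VC

open Finset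

set_option linter.unusedSectionVars false
set_option linter.unusedVariables false

variable {G : Type*} [AddCommGroup G] [Fintype G] [DecidableEq G]

/-- averaging over `S - S` -/
noncomputable def PP (S : Finset G) (f : G → ℝ) (x : G) : ℝ :=
  (∑ s ∈ S, ∑ s' ∈ S, f (x + (s - s'))) / (S.card : ℝ) ^ 2

lemma PP_sum_le (S : Finset G) (hS : S.Nonempty) (f : G → ℝ) (X : Finset G) (C : ℝ)
    (h : ∀ s ∈ S, ∀ s' ∈ S, ∑ x ∈ X, f (x + (s - s')) ≤ C) :
    ∑ x ∈ X, PP S f x ≤ C := by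
  have hc : (0 : ℝ) < S.card := by exact_mod_cast hS.card_pos
  unfold PP
  rw [← Finset.sum_div, div_le_iff₀ (by positivity), Finset.sum_comm]
  have : ∀ s ∈ S, ∑ x ∈ X, ∑ s' ∈ S, f (x + (s - s')) ≤ S.card * C := by
    intro s hs
    rw [Finset.sum_comm]
    have := Finset.sum_le_card_nsmul _ _ _ (h s hs)
    simpa using this
  have := Finset.sum_le_card_nsmul _ _ _ this
  rw [nsmul_eq_mul] at this
  linarith

lemma PP_ge (S : Finset G) (hS : S.Nonempty) (f : G → ℝ) (x : G) (C : ℝ)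
    (h : ∀ s ∈ S, ∀ s' ∈ S, C ≤ f (x + (s - s'))) : C ≤ PP S f x := by
  have hc : (0 : ℝ) < S.card := by exact_mod_cast hS.card_pos
  unfold PP
  rw [le_div_iff₀ (by positivity)]
  have : ∀ s ∈ S, S.card * C ≤ ∑ s' ∈ S, f (x + (s - s')) := by
    intro s hs
    have := Finset.card_nsmul_le_sum _ _ _ (h s hs)
    simpa using this
  have := Finset.card_nsmul_le_sum _ _ _ this
  rw [nsmul_eq_mul] at this
  linarith

lemma PP_iter_le (Γ : Finset (AddChar G ℂ)) (S : Finset G) (hS : S.Nonempty) {ρ rZ e q : ℝ}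
    (hSB : S ⊆ bohr Γ ρ) (H : G → ℝ) (H0 : ∀ x, 0 ≤ H x) (H2 : ∀ x, H x ≤ 2) (hq : 1 ≤ q)
    (he : 0 ≤ e) (hρ : 0 ≤ ρ)
    (hrel : ∀ s ∈ S, ∀ s' ∈ S, ∃ E : Finset G, (E.card : ℝ) ≤ e ∧
        ∀ x ∈ bohr Γ rZ, x + (s - s') ∈ bohr Γ rZ → x ∉ E → H (x + (s - s')) ≤ q * H x)
    (j : ℕ) (X : Finset G) (r : ℝ) (hX : X ⊆ bohr Γ r) (hr : r + j * (2 * ρ) ≤ rZ) :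
    ∑ x ∈ X, (PP S)^[j] H x ≤ q ^ j * ∑ x ∈ X, H x + j * q ^ j * (2 * e) := by
  classical
  induction j generalizing X r with
  | zero => simp
  | succ j ih =>
    simp only [Function.iterate_succ_apply']
    push_cast at hr
    apply PP_sum_le S hS
    intro s hs s' hs'
    have ht : s - s' ∈ bohr Γ (2 * ρ) := bohr_sub (hSB hs) (hSB hs') (by linarith)
    have hX' : X.image (fun x => x + (s - s')) ⊆ bohr Γ (r + 2 * ρ) := by
      intro y hy
      obtain ⟨x, hx, rfl⟩ := mem_image.mp hy
      exact bohr_add (hX hx) ht le_rfl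
    have h1 := ih _ _ hX' (by linarith)
    rw [Finset.sum_image (fun a _ b _ h => add_left_injective _ h),
      Finset.sum_image (fun a _ b _ h => add_left_injective _ h)] at h1
    have hj0 : 0 ≤ (j : ℝ) * (2 * ρ) := by positivity
    have h2 : ∑ x ∈ X, H (x + (s - s')) ≤ q * ∑ x ∈ X, H x + 2 * e := by
      obtain ⟨E, hE, hrE⟩ := hrel s hs s' hs'
      have : ∀ x ∈ X, H (x + (s - s')) ≤ q * H x + 2 * (if x ∈ E then 1 else 0) := by
        intro x hx
        have h0 := H0 x
        split_ifs with hxE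
        · have := H2 (x + (s - s')); nlinarith
        · have := hrE x (bohr_mono (by linarith) (hX hx))
            (bohr_mono (by linarith) (hX' (mem_image_of_mem _ hx))) hxE
          linarith
      refine (Finset.sum_le_sum this).trans ?_
      rw [Finset.sum_add_distrib, ← Finset.mul_sum, ← Finset.mul_sum, Finset.sum_boole]
      have : ((X.filter (fun x => x ∈ E)).card : ℝ) ≤ E.card := by
        exact_mod_cast Finset.card_le_card (fun x hx => (mem_filter.mp hx).2)
      linarith
    have hqj : 1 ≤ q ^ j := one_le_pow₀ hq
    have h3 : q ^ j * ∑ x ∈ X, H (x + (s - s')) ≤ q ^ j * (q * ∑ x ∈ X, H x + 2 * e) := by gcongr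
    push_cast
    rw [pow_succ]
    have h4 : (j : ℝ) * q ^ j * (2 * e) + q ^ j * (2 * e) ≤ (j + 1) * (q ^ j * q) * (2 * e) := by
      have : q ^ j ≤ q ^ j * q := by nlinarith
      have h5 : (j + 1) * q ^ j * (2 * e) ≤ (j + 1) * (q ^ j * q) * (2 * e) := by gcongr
      linarith
    linarith

lemma PP_iter_ge (Γ : Finset (AddChar G ℂ)) (S : Finset G) (hS : S.Nonempty) {ρ rZ C : ℝ}
    (hSB : S ⊆ bohr Γ ρ) (hρ : 0 ≤ ρ) (f : G → ℝ) (hf : ∀ x ∈ bohr Γ rZ, C ≤ f x)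
    (j : ℕ) (x : G) (r : ℝ) (hx : x ∈ bohr Γ r) (hr : r + j * (2 * ρ) ≤ rZ) :
    C ≤ (PP S)^[j] f x := by
  induction j generalizing x r with
  | zero => simp at hr; exact hf x (bohr_mono hr hx)
  | succ j ih =>
    rw [Function.iterate_succ_apply']
    push_cast at hr
    apply PP_ge S hS
    intro s hs s' hs'
    have ht : s - s' ∈ bohr Γ (2 * ρ) := bohr_sub (hSB hs) (hSB hs') (by linarith)
    exact ih _ _ (bohr_add hx ht le_rfl) (by linarith)

lemma PP_iter_shift_sum (S : Finset G) {ι : Type*} (I : Finset ι) (t : ι → G) (f : G → ℝ)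
    (j : ℕ) (x : G) :
    (PP S)^[j] (fun y => ∑ i ∈ I, f (y + t i)) x = ∑ i ∈ I, (PP S)^[j] f (x + t i) := by
  induction j generalizing x with
  | zero => simp
  | succ j ih =>
    simp only [Function.iterate_succ_apply']
    unfold PP at *
    rw [← Finset.sum_div]
    congr 1
    conv_rhs => rw [Finset.sum_comm]
    apply Finset.sum_congr rfl
    intro s _
    conv_rhs => rw [Finset.sum_comm]
    apply Finset.sum_congr rfl
    intro s' _
    rw [ih]
    apply Finset.sum_congr rfl
    intro i _
    rw [show x + (s - s') + t i = x + t i + (s - s') by abel]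

lemma PP_add_const (S : Finset G) (hS : S.Nonempty) (f : G → ℝ) (c : ℝ) (j : ℕ) (x : G) :
    (PP S)^[j] (fun y => f y + c) x = (PP S)^[j] f x + c := by
  have hc : (0 : ℝ) < S.card := by exact_mod_cast hS.card_pos
  induction j generalizing x with
  | zero => simp
  | succ j ih =>
    simp only [Function.iterate_succ_apply']
    unfold PP at *
    simp only [ih, Finset.sum_add_distrib, Finset.sum_const, nsmul_eq_mul]
    field_simp

/-- Fourier coefficients of `FF` -/
noncomputable def bco (A : Finset G) (ψ : AddChar G ℂ) : ℂ :=
  (∑ a ∈ A, ψ (-a)) ^ 2 / (Fintype.card G * A.card)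

lemma FF_fourier (A : Finset G) (x : G) :
    (FF A x : ℂ) = ∑ ψ : AddChar G ℂ, bco A ψ * ψ (x + x) := by
  have hN : (Fintype.card G : ℂ) ≠ 0 := by exact_mod_cast Fintype.card_ne_zero
  have h1 : ∀ ψ : AddChar G ℂ, bco A ψ * ψ (x + x) =
      (∑ a ∈ A, ∑ a' ∈ A, ψ (x + x - a - a')) / (Fintype.card G * A.card) := by
    intro ψ
    unfold bco
    rw [div_mul_eq_mul_div, sq, Finset.sum_mul_sum, Finset.sum_mul]
    congr 1
    apply Finset.sum_congr rfl
    intro a _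
    rw [Finset.sum_mul]
    apply Finset.sum_congr rfl
    intro a' _
    rw [← AddChar.map_add_eq_mul, ← AddChar.map_add_eq_mul]
    congr 1; abel
  simp only [h1]
  rw [← Finset.sum_div, Finset.sum_comm]
  have h2 : ∀ a ∈ A, ∑ ψ : AddChar G ℂ, ∑ a' ∈ A, ψ (x + x - a - a') =
      if x + x - a ∈ A then (Fintype.card G : ℂ) else 0 := by
    intro a _
    rw [Finset.sum_comm]
    simp only [AddChar.sum_apply_eq_ite, sub_eq_zero]
    simp
  rw [Finset.sum_congr rfl h2]
  unfold FF
  push_cast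
  rw [← Finset.sum_filter, Finset.sum_const, nsmul_eq_mul]
  by_cases hA : (A.card : ℂ) = 0
  · simp [hA]
  field_simp

lemma bco_sum (A : Finset G) (hA : A.Nonempty) : ∑ ψ : AddChar G ℂ, ‖bco A ψ‖ = 1 := by
  have hN : (Fintype.card G : ℝ) ≠ 0 := by exact_mod_cast Fintype.card_ne_zero
  have hc : (A.card : ℝ) ≠ 0 := by exact_mod_cast hA.card_pos.ne'
  have h1 : ∀ ψ : AddChar G ℂ, ((‖∑ a ∈ A, ψ (-a)‖ ^ 2 : ℝ) : ℂ) =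
      ∑ a ∈ A, ∑ a' ∈ A, ψ (a - a') := by
    intro ψ
    push_cast
    rw [← Complex.conj_mul', map_sum, Finset.sum_mul_sum]
    apply Finset.sum_congr rfl
    intro a _
    apply Finset.sum_congr rfl
    intro a' _
    rw [← AddChar.map_neg_eq_conj, ← AddChar.map_add_eq_mul]
    congr 1; abel
  have h2 : ((∑ ψ : AddChar G ℂ, ‖∑ a ∈ A, ψ (-a)‖ ^ 2 : ℝ) : ℂ) =
      ((Fintype.card G * A.card : ℝ) : ℂ) := by
    rw [Complex.ofReal_sum]
    simp only [h1]
    rw [Finset.sum_comm]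
    have h2 : ∀ a ∈ A, ∑ ψ : AddChar G ℂ, ∑ a' ∈ A, ψ (a - a') = (Fintype.card G : ℂ) := by
      intro a ha
      rw [Finset.sum_comm]
      simp only [AddChar.sum_apply_eq_ite, sub_eq_zero]
      simp [ha]
    rw [Finset.sum_congr rfl h2]
    simp [mul_comm]
  have h3 := Complex.ofReal_injective h2
  have h4 : ∀ ψ : AddChar G ℂ, ‖bco A ψ‖ =
      ‖∑ a ∈ A, ψ (-a)‖ ^ 2 / (Fintype.card G * A.card) := by
    intro ψ; unfold bco; simp
  simp only [h4]
  rw [← Finset.sum_div, h3]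
  field_simp

lemma ft_sq (S : Finset G) (χ : AddChar G ℂ) :
    (∑ s ∈ S, ∑ s' ∈ S, χ (s - s')) / (S.card : ℂ) ^ 2 = ((‖ft S χ‖ ^ 2 : ℝ) : ℂ) := by
  push_cast
  rw [← Complex.mul_conj']
  unfold ft
  rw [map_div₀, map_sum, div_mul_div_comm, Finset.sum_mul_sum, Complex.conj_natCast, sq]
  congr 1
  apply Finset.sum_congr rfl
  intro a _
  apply Finset.sum_congr rfl
  intro a' _
  rw [← AddChar.map_neg_eq_conj, ← AddChar.map_add_eq_mul]
  congr 1; abel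

lemma PP_fourier (A S : Finset G) (k : ℕ) (x : G) :
    ((PP S)^[k] (FF A) x : ℂ) =
      ∑ ψ : AddChar G ℂ, bco A ψ * ((‖ft S (ψ * ψ)‖ ^ 2 : ℝ) : ℂ) ^ k * ψ (x + x) := by
  induction k generalizing x with
  | zero => simp [FF_fourier]
  | succ k ih =>
    rw [Function.iterate_succ_apply']
    unfold PP at *
    push_cast at *
    simp only [ih]
    have : ∀ ψ : AddChar G ℂ, bco A ψ * ((‖ft S (ψ * ψ)‖ : ℂ) ^ 2) ^ (k + 1) * ψ (x + x) =
        (∑ s ∈ S, ∑ s' ∈ S, bco A ψ * ((‖ft S (ψ * ψ)‖ : ℂ) ^ 2) ^ k *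
          ψ (x + (s - s') + (x + (s - s')))) / (S.card : ℂ) ^ 2 := by
      intro ψ
      have h : (∑ s ∈ S, ∑ s' ∈ S, (ψ * ψ) (s - s')) / (S.card : ℂ) ^ 2 =
          (‖ft S (ψ * ψ)‖ : ℂ) ^ 2 := by
        rw [ft_sq S (ψ * ψ), Complex.ofReal_pow]
      rw [pow_succ]
      nth_rewrite 2 [← h]
      have e : ∀ s s', ψ (x + (s - s') + (x + (s - s'))) = ψ (x + x) * (ψ * ψ) (s - s') := by
        intro s s'
        rw [AddChar.mul_apply, ← AddChar.map_add_eq_mul, ← AddChar.map_add_eq_mul]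
        congr 1; abel
      simp only [e, ← mul_assoc, ← Finset.mul_sum]
      ring
    simp only [this]
    rw [← Finset.sum_div]
    congr 1
    conv_rhs => rw [Finset.sum_comm]
    apply Finset.sum_congr rfl
    intro s _
    conv_rhs => rw [Finset.sum_comm]

lemma PP_shift (A S : Finset G) (hA : A.Nonempty) (k : ℕ) (x v : G) (ε : ℝ)
    (h : ∀ χ : AddChar G ℂ, ‖ft S χ‖ ^ (2 * k) * ‖1 - χ v‖ ≤ ε) :
    (PP S)^[k] (FF A) (x + v) ≤ (PP S)^[k] (FF A) x + ε := by
  have key : ‖(((PP S)^[k] (FF A) x - (PP S)^[k] (FF A) (x + v) : ℝ) : ℂ)‖ ≤ ε := by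
    push_cast
    rw [PP_fourier, PP_fourier, ← Finset.sum_sub_distrib]
    refine (norm_sum_le _ _).trans ?_
    calc _ ≤ ∑ ψ : AddChar G ℂ, ‖bco A ψ‖ * ε := by
          apply Finset.sum_le_sum
          intro ψ _
          have e : bco A ψ * ((‖ft S (ψ * ψ)‖ ^ 2 : ℝ) : ℂ) ^ k * ψ (x + x) -
              bco A ψ * ((‖ft S (ψ * ψ)‖ ^ 2 : ℝ) : ℂ) ^ k * ψ (x + v + (x + v)) =
              bco A ψ * (((‖ft S (ψ * ψ)‖ ^ 2 : ℝ) : ℂ) ^ k * ψ (x + x) * (1 - (ψ * ψ) v)) := by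
            have : ψ (x + v + (x + v)) = ψ (x + x) * (ψ * ψ) v := by
              rw [AddChar.mul_apply, ← AddChar.map_add_eq_mul, ← AddChar.map_add_eq_mul]
              congr 1; abel
            rw [this]; ring
          rw [e, norm_mul]
          gcongr
          rw [norm_mul, norm_mul, AddChar.norm_apply, mul_one, norm_pow, Complex.norm_real,
            norm_pow, norm_norm, ← pow_mul]
          exact h _
      _ = ε := by rw [← Finset.sum_mul, bco_sum A hA, one_mul]
  rw [Complex.norm_real, Real.norm_eq_abs] at key
  have := (abs_le.mp key).1
  linarith

end VC


namespace VC

open Finset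

set_option linter.unusedSectionVars false
set_option linter.unusedVariables false

variable {G : Type*} [AddCommGroup G] [Fintype G] [DecidableEq G]

/-- pairs `(a,b)` with `a, b, 2b-a` in `A` -/
def TT (A : Finset G) : ℕ := ((A ×ˢ A).filter (fun p => p.2 + p.2 - p.1 ∈ A)).card

lemma TT_le (A A' : Finset G) (f : G → G) (hf : Function.Injective f)
    (haff : ∀ a b, f (b + b - a) = f b + f b - f a) (h : ∀ a ∈ A', f a ∈ A) : TT A' ≤ TT A := by
  unfold TT
  apply Finset.card_le_card_of_injOn (Prod.map f f)
  · intro p hp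
    simp only [coe_filter, mem_product, Set.mem_ofPred_eq, Prod.map_fst, Prod.map_snd] at hp ⊢
    exact ⟨⟨h _ hp.1.1, h _ hp.1.2⟩, by rw [← haff]; exact h _ hp.2⟩
  · exact (hf.prodMap hf).injOn

lemma TT_ge (A A1 A2 : Finset G) (h1 : A1 ⊆ A) (h2 : A2 ⊆ A) :
    ∑ b ∈ A2, (A1.card : ℝ) * FF A1 b ≤ TT A := by
  have e : ∀ b ∈ A2, (A1.card : ℝ) * FF A1 b =
      ((A1.filter (fun a => b + b - a ∈ A1)).card : ℝ) := by
    intro b _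
    unfold FF
    by_cases h : (A1.card : ℝ) = 0
    · have : A1 = ∅ := by simpa using h
      simp [this]
    · field_simp
  rw [Finset.sum_congr rfl e]
  have : ∑ b ∈ A2, (A1.filter (fun a => b + b - a ∈ A1)).card =
      ((A1 ×ˢ A2).filter (fun p => p.2 + p.2 - p.1 ∈ A1)).card := by
    simp only [Finset.card_filter]
    rw [Finset.sum_product_right]
  rw [← Nat.cast_sum, this]
  norm_cast
  apply Finset.card_le_card
  intro p hp
  simp only [mem_filter, mem_product] at hp ⊢
  exact ⟨⟨h1 hp.1.1, h2 hp.1.2⟩, h1 hp.2⟩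

/-- count of `v ∈ D` with `y + 2v ∈ A` -/
def gg (A D : Finset G) (y : G) : ℕ := (D.filter (fun v => y + (v + v) ∈ A)).card

lemma gg_sum (A D : Finset G) : ∑ y, (gg A D y : ℝ) = A.card * D.card := by
  unfold gg
  simp only [Finset.card_filter]
  push_cast
  rw [Finset.sum_comm]
  have : ∀ v ∈ D, ∑ y : G, (if y + (v + v) ∈ A then (1 : ℝ) else 0) = A.card := by
    intro v _
    rw [Fintype.sum_equiv (Equiv.addRight (v + v)) _ (fun y => if y ∈ A then (1 : ℝ) else 0)
      (by intro y; rfl)]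
    simp
  rw [Finset.sum_congr rfl this]
  simp [mul_comm]

lemma gg_conv (A D : Finset G) (hA : A.Nonempty) (x : G) :
    ∑ v ∈ D, ∑ v' ∈ D, FF A (x + (v + v')) * A.card =
      ∑ z, (gg A D z : ℝ) * gg A D (x + x - z) := by
  have hc : (A.card : ℝ) ≠ 0 := by exact_mod_cast hA.card_pos.ne'
  have e : ∀ y, FF A y * A.card = ∑ a, (if a ∈ A then (if y + y - a ∈ A then (1 : ℝ) else 0) else 0) := by
    intro y
    unfold FF
    rw [div_mul_cancel₀ _ hc, Finset.card_filter]
    push_cast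
    simp [Finset.sum_ite_mem]
  simp only [e]
  have e2 : ∀ v ∈ D, ∀ v' ∈ D, ∑ a, (if a ∈ A then (if x + (v + v') + (x + (v + v')) - a ∈ A
      then (1 : ℝ) else 0) else 0) = ∑ z, (if z + (v + v) ∈ A then (1 : ℝ) else 0) *
        (if x + x - z + (v' + v') ∈ A then 1 else 0) := by
    intro v _ v' _
    symm
    apply Fintype.sum_equiv (Equiv.addRight (v + v))
    intro z
    have e3 : x + (v + v') + (x + (v + v')) - (z + (v + v)) = x + x - z + (v' + v') := by abel
    change _ = if z + (v + v) ∈ A then (if x + (v + v') + (x + (v + v')) - (z + (v + v)) ∈ A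
      then (1 : ℝ) else 0) else 0
    simp only [e3]
    split_ifs <;> simp
  rw [Finset.sum_congr rfl fun v hv => Finset.sum_congr rfl fun v' hv' => e2 v hv v' hv']
  unfold gg
  simp only [Finset.card_filter]
  push_cast
  simp only [Finset.sum_mul_sum]
  conv_rhs => rw [Finset.sum_comm]
  apply Finset.sum_congr rfl
  intro v _
  conv_rhs => rw [Finset.sum_comm]

lemma gg_lower (A D R : Finset G) (hA : A.Nonempty) (x : G) (M : ℝ)
    (hM : ∀ y, (gg A D y : ℝ) ≤ M)
    (hR : ∀ a ∈ A, ∀ v ∈ D, a - (v + v) ∈ R ∧ x + x - (a - (v + v)) ∈ R) :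
    M * (2 * (A.card * D.card) - M * R.card) ≤
      ∑ v ∈ D, ∑ v' ∈ D, FF A (x + (v + v')) * A.card := by
  rw [gg_conv A D hA]
  have hs : ∀ z, gg A D z ≠ 0 → z ∈ R ∧ x + x - z ∈ R := by
    intro z hz
    obtain ⟨v, hv⟩ := Finset.card_pos.mp (Nat.pos_of_ne_zero hz)
    rw [mem_filter] at hv
    have := hR _ hv.2 _ hv.1
    simpa using this
  have h1 : ∑ z, (gg A D z : ℝ) * gg A D (x + x - z) =
      ∑ z ∈ R, (gg A D z : ℝ) * gg A D (x + x - z) := by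
    symm
    apply Finset.sum_subset (subset_univ _)
    intro z _ hz
    have : gg A D z = 0 := by by_contra h; exact hz (hs z h).1
    simp [this]
  have h2 : ∑ z ∈ R, (gg A D z : ℝ) = A.card * D.card := by
    rw [← gg_sum A D]
    apply Finset.sum_subset (subset_univ _)
    intro z _ hz
    have : gg A D z = 0 := by by_contra h; exact hz (hs z h).1
    simp [this]
  have h3 : ∑ z ∈ R, (gg A D (x + x - z) : ℝ) = A.card * D.card := by
    rw [← gg_sum A D]
    rw [← Fintype.sum_equiv (Equiv.subLeft (x + x)) (fun z => (gg A D (x + x - z) : ℝ))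
      (fun z => (gg A D z : ℝ)) (by intro z; simp)]
    apply Finset.sum_subset (subset_univ _)
    intro z _ hz
    have : gg A D (x + x - z) = 0 := by
      by_contra h; exact hz (by simpa using (hs _ h).2)
    simp [this]
  rw [h1]
  have h4 : ∑ z ∈ R, (M * gg A D z + M * gg A D (x + x - z) - M * M) ≤
      ∑ z ∈ R, (gg A D z : ℝ) * gg A D (x + x - z) := by
    apply Finset.sum_le_sum
    intro z _
    nlinarith [hM z, hM (x + x - z)]
  rw [Finset.sum_sub_distrib, Finset.sum_add_distrib, ← Finset.mul_sum, ← Finset.mul_sum, h2, h3] at h4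
  simp only [Finset.sum_const, nsmul_eq_mul] at h4
  linarith

lemma char_close (Γ : Finset (AddChar G ℂ)) {ρ τ ε : ℝ} (hρ : 0 ≤ ρ) (hτ : 0 ≤ τ)
    (hreg : ((bohr Γ (ρ + τ)).card : ℝ) ≤ (1 + ε) * (bohr Γ ρ).card) (v : G) (hv : v ∈ bohr Γ τ)
    (χ : AddChar G ℂ) (hχ : 1 / 2 ≤ ‖ft (bohr Γ ρ) χ‖) : ‖1 - χ v‖ ≤ 4 * ε := by
  set U := bohr Γ ρ with hU
  have hUpos : (0 : ℝ) < U.card := bohr_card_pos hρ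
  let V := U.image (fun u => u + v)
  have hVc : V.card = U.card := Finset.card_image_of_injective _ (add_left_injective v)
  have hVs : ∑ w ∈ V, χ w = χ v * ∑ u ∈ U, χ u := by
    rw [Finset.sum_image (fun a _ b _ h => add_left_injective _ h), Finset.mul_sum]
    apply Finset.sum_congr rfl
    intro u _
    rw [AddChar.map_add_eq_mul, mul_comm]
  have hsub : V ∪ U ⊆ bohr Γ (ρ + τ) := by
    apply Finset.union_subset
    · intro w hw
      obtain ⟨u, hu, rfl⟩ := mem_image.mp hw
      exact bohr_add hu hv le_rfl
    · exact bohr_mono (by linarith)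
  have hcard : ((V \ U).card : ℝ) ≤ ε * U.card := by
    have h1 : (V \ U).card + U.card = (V ∪ U).card := Finset.card_sdiff_add_card V U
    have h2 := Finset.card_le_card hsub
    have h3 : ((V \ U).card : ℝ) + U.card ≤ (bohr Γ (ρ + τ)).card := by
      rw [← h1] at h2; exact_mod_cast h2
    linarith
  have hcard2 : (U \ V).card = (V \ U).card := Finset.card_sdiff_comm hVc.symm
  have hdiff : (1 - χ v) * ∑ u ∈ U, χ u = ∑ u ∈ U \ V, χ u - ∑ u ∈ V \ U, χ u := by
    rw [Finset.sum_sdiff_sub_sum_sdiff, hVs]; ring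
  have hn : ∀ X : Finset G, ‖∑ u ∈ X, χ u‖ ≤ X.card := by
    intro X
    refine (norm_sum_le _ _).trans ?_
    simp
  have h5 : ‖1 - χ v‖ * ‖∑ u ∈ U, χ u‖ ≤ 2 * (ε * U.card) := by
    rw [← norm_mul, hdiff]
    refine (norm_sub_le _ _).trans ?_
    have := hn (U \ V)
    rw [hcard2] at this
    linarith [hn (V \ U)]
  unfold ft at hχ
  rw [norm_div, Complex.norm_natCast, le_div_iff₀ hUpos] at hχ
  have h6 : ‖1 - χ v‖ * (1 / 2 * U.card) ≤ 2 * (ε * U.card) :=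
    (mul_le_mul_of_nonneg_left hχ (norm_nonneg _)).trans h5
  have h7 : ‖1 - χ v‖ * U.card ≤ 4 * ε * U.card := by linarith
  exact le_of_mul_le_mul_right h7 hUpos

/-- if `γψ` close and `ψ` close then `γ` close -/
lemma char_combine (γ ψ : AddChar G ℂ) (v : G) (a b : ℝ) (hψ : ‖1 - ψ v‖ ≤ b)
    (h : ‖1 - (γ * ψ) v‖ ≤ a ∨ ‖1 - (γ⁻¹ * ψ) v‖ ≤ a) : ‖1 - γ v‖ ≤ a + b := by
  have key : ∀ φ : AddChar G ℂ, ‖1 - (φ * ψ) v‖ ≤ a → ‖1 - φ v‖ ≤ a + b := by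
    intro φ hφ
    have : 1 - φ v = (1 - (φ * ψ) v) - φ v * (1 - ψ v) := by
      rw [AddChar.mul_apply]; ring
    rw [this]
    refine (norm_sub_le _ _).trans ?_
    rw [norm_mul, AddChar.norm_apply, one_mul]
    linarith
  rcases h with h | h
  · exact key _ h
  · have := key _ h
    rwa [AddChar.inv_apply, norm_one_sub_neg] at this

/-- translates -/
def ct (A B : Finset G) (y : G) : ℕ := (B.filter (fun b => y + b ∈ A)).card

lemma ct_sum (A B X : Finset G) (h : ∀ a ∈ A, ∀ b ∈ B, a - b ∈ X) :
    ∑ y ∈ X, (ct A B y : ℝ) = A.card * B.card := by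
  unfold ct
  simp only [Finset.card_filter]
  push_cast
  rw [Finset.sum_comm]
  have : ∀ b ∈ B, ∑ y ∈ X, (if y + b ∈ A then (1 : ℝ) else 0) = A.card := by
    intro b hb
    rw [Finset.sum_boole]
    norm_cast
    apply Finset.card_bij (fun y _ => y + b)
    · intro y hy; exact (mem_filter.mp hy).2
    · intro y _ z _ h; simpa using h
    · intro a ha
      exact ⟨a - b, by simp [h a ha b hb, ha], by simp⟩
  rw [Finset.sum_congr rfl this]
  simp [mul_comm]

end VC


namespace VC

open Finset

set_option linter.unusedSectionVars false
set_option linter.unusedVariables false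

variable {G : Type*} [AddCommGroup G] [Fintype G] [DecidableEq G]

lemma qk_bound {k : ℕ} (hk : 1 ≤ k) {δ : ℝ} (hδ : δ = 1 / (32 * k)) :
    ((1 + δ) / (1 - δ)) ^ k ≤ 111 / 100 := by
  have hk' : (1 : ℝ) ≤ k := by exact_mod_cast hk
  have hk0 : (0 : ℝ) < k := by linarith
  have hd : δ ≤ 1 / 32 := by
    rw [hδ]; apply one_div_le_one_div_of_le <;> linarith
  have hd0 : 0 < δ := by rw [hδ]; positivity
  have hkd : k * δ = 1 / 32 := by rw [hδ]; field_simp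
  have h1 : (1 + δ) / (1 - δ) ≤ Real.exp (3 * δ) := by
    refine le_trans ?_ (Real.add_one_le_exp _)
    rw [div_le_iff₀ (by linarith)]
    nlinarith
  calc ((1 + δ) / (1 - δ)) ^ k ≤ (Real.exp (3 * δ)) ^ k :=
        pow_le_pow_left₀ (div_nonneg (by linarith) (by linarith)) h1 k
    _ = Real.exp (3 / 32) := by
        rw [← Real.exp_nat_mul]; congr 1; linarith
    _ ≤ 111 / 100 := by
        have := Real.add_one_le_exp (-(3 / 32 : ℝ))
        rw [Real.exp_neg] at this
        have h2 := Real.exp_pos (3 / 32)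
        have h3 : (29 / 32) * Real.exp (3 / 32) ≤ 1 := by
          have := mul_le_mul_of_nonneg_right this h2.le
          rw [inv_mul_cancel₀ h2.ne'] at this
          linarith
        linarith

lemma alg1 (k Q η b : ℝ) (hk : 0 < k) :
    k * Q * (2 * (4 * (η ^ 2 / (1200 * k)) * b)) = Q * (η ^ 2 * b / 150) := by
  field_simp; ring

lemma alg2 (k Q η α b c X : ℝ) (hk : 0 < k) (hQ : Q ≤ 111 / 100) (hQ0 : 0 ≤ Q) (hη : 0 < η)
    (hηα : η ≤ α) (hb : 0 ≤ b) (hbc : b ≤ 101 / 100 * c) (hc : 88 / 100 * α * c ≤ 2 * X)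
    (hX : 0 < X) :
    k * Q * (2 * (4 * (η ^ 2 / (1200 * k)) * b)) ≤ 2 / 100 * α * X := by
  rw [alg1 _ _ _ _ hk]
  have hα : 0 < α := by linarith
  have h1 : η ^ 2 * b ≤ α * (α * (101 / 100 * c)) := by
    have : η ^ 2 ≤ α * α := by nlinarith
    rw [← mul_assoc]
    exact mul_le_mul this hbc (by positivity) (by positivity)
  have h2 : α * (101 / 100 * c) ≤ 101 / 88 * (2 * X) := by linarith
  have h3 : η ^ 2 * b ≤ α * (101 / 88 * (2 * X)) := h1.trans (by gcongr)
  have h4 : Q * (η ^ 2 * b / 150) ≤ 111 / 100 * (α * (101 / 88 * (2 * X)) / 150) := by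
    apply mul_le_mul hQ (by linarith) (by positivity) (by norm_num)
  have h5 : 0 < α * X := by positivity
  linarith

set_option maxHeartbeats 1000000 in
lemma core1 (Γ : Finset (AddChar G ℂ)) {ρ1 ρ2 ρ3 θ α η : ℝ} {k m : ℕ}
    (hρ1 : 0 < ρ1) (hρ2 : 0 < ρ2) (hρ3 : 0 < ρ3) (hθ : 0 < θ) (hθ1 : θ ≤ 1)
    (hη : 0 < η) (hηα : η ≤ α) (hα1 : α ≤ 1) (hk : 1 ≤ k) (hm : 0 < m)
    (hreg1 : ((bohr Γ (ρ1 + θ * ρ1)).card : ℝ) ≤ 101 / 100 * (bohr Γ ρ1).card)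
    (hreg2 : ((bohr Γ (ρ2 + θ * ρ2)).card : ℝ) ≤ 101 / 100 * (bohr Γ ρ2).card)
    (h21 : ρ2 ≤ θ * ρ1 / 8) (h32 : ρ3 ≤ θ * ρ2 / (2 * k))
    (hβ : 2 * Real.exp (-(m * η * (1 / (32 * k : ℝ)) ^ 2 / 4)) ≤ η ^ 2 / (1200 * k))
    (A1 A2 : Finset G) (hA1 : A1 ⊆ bohr Γ ρ1) (hA2 : A2 ⊆ bohr Γ ρ2)
    (hd1 : 88 / 100 * α * (bohr Γ ρ1).card ≤ A1.card)
    (hd2 : 88 / 100 * α * (bohr Γ ρ2).card ≤ A2.card)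
    (hfew : ∑ b ∈ A2, FF A1 b ≤ α / 32 * A2.card) :
    ∃ S ⊆ bohr Γ ρ3, S.Nonempty ∧ ((bohr Γ ρ3).card : ℝ) * (η / 2) ^ m ≤ 2 * S.card ∧
      ∃ x ∈ A2, (PP S)^[k] (FF A1) x ≤ α / 4 := by
  have hα : 0 < α := by linarith
  have hk' : (1 : ℝ) ≤ k := by exact_mod_cast hk
  have hk0 : (0 : ℝ) < k := by linarith
  have hB1 : (0 : ℝ) < (bohr Γ ρ1).card := bohr_card_pos hρ1.le
  have hB2 : (0 : ℝ) < (bohr Γ ρ2).card := bohr_card_pos hρ2.le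
  have hB3 : (0 : ℝ) < (bohr Γ ρ3).card := bohr_card_pos hρ3.le
  have hA1p : (0 : ℝ) < A1.card := lt_of_lt_of_le (by positivity) hd1
  have hA2p : (0 : ℝ) < A2.card := lt_of_lt_of_le (by positivity) hd2
  have hA1n : A1.Nonempty := card_pos.mp (by exact_mod_cast hA1p)
  set R := bohr Γ (ρ1 + θ * ρ1) with hR
  have hRp : (0 : ℝ) < R.card := bohr_card_pos (by positivity)
  set δ : ℝ := 1 / (32 * k) with hδ
  have hδ0 : 0 < δ := by rw [hδ]; positivity
  have hδ1 : δ ≤ 1 / 32 := by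
    rw [hδ]; apply one_div_le_one_div_of_le <;> linarith
  have h32' : ρ3 ≤ θ * ρ2 / 2 := by
    refine h32.trans ?_
    apply div_le_div_of_nonneg_left (by positivity) (by norm_num) (by linarith)
  have h32k : k * (2 * ρ3) ≤ θ * ρ2 := by
    rw [le_div_iff₀ (by positivity)] at h32; linarith
  have hβ' : 2 * Real.exp (-(m * α * δ ^ 2 / 4)) ≤ η ^ 2 / (1200 * k) := by
    refine le_trans ?_ hβ
    gcongr
  obtain ⟨S, hSB, hScard, hrel⟩ := croot_sisask A1 (bohr Γ (ρ2 + θ * ρ2)) (bohr Γ ρ3) R hA1n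
    (card_pos.mp (by exact_mod_cast hB3))
    (by
      intro a ha s hs
      have := bohr_add hs hs (le_refl _)
      refine bohr_add (hA1 ha) this ?_
      nlinarith) hm hδ0 (by linarith) hα.le hβ' (by positivity)
  have hS1 : ((bohr Γ ρ3).card : ℝ) * (η / 2) ^ m ≤ 2 * S.card := by
    have h1 : η / 2 * R.card ≤ A1.card := by nlinarith
    have h2 : (η / 2 * R.card) ^ m ≤ (A1.card : ℝ) ^ m := by gcongr
    have h3 : ((bohr Γ ρ3).card : ℝ) * (η / 2 * R.card) ^ m ≤ 2 * S.card * (R.card : ℝ) ^ m :=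
      le_trans (by gcongr) hScard
    rw [mul_pow, ← mul_assoc] at h3
    exact le_of_mul_le_mul_right h3 (by positivity)
  have hSn : S.Nonempty := by
    rw [← card_pos]
    have : (0 : ℝ) < 2 * S.card := lt_of_lt_of_le (by positivity) hS1
    have : (0 : ℝ) < S.card := by linarith
    exact_mod_cast this
  refine ⟨S, hSB, hSn, hS1, ?_⟩
  set q := (1 + δ) / (1 - δ) with hq
  have hq1 : 1 ≤ q := by rw [hq, le_div_iff₀ (by linarith)]; linarith
  have hqk : q ^ k ≤ 111 / 100 := qk_bound hk hδ
  set X := A2.filter (fun b => FF A1 b ≤ α / 16) with hX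
  have hXc : (A2.card : ℝ) ≤ 2 * X.card := by
    have h1 : ∑ b ∈ A2.filter (fun b => ¬ FF A1 b ≤ α / 16), α / 16 ≤ ∑ b ∈ A2, FF A1 b := by
      refine le_trans (Finset.sum_le_sum (g := FF A1) ?_)
        (Finset.sum_le_sum_of_subset_of_nonneg (filter_subset _ _) (fun _ _ _ => FF_nonneg _ _))
      intro b hb
      have := (mem_filter.mp hb).2
      linarith
    rw [Finset.sum_const, nsmul_eq_mul] at h1
    have h2 := Finset.card_filter_add_card_filter_not (s := A2) (fun b => FF A1 b ≤ α / 16)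
    have h3 : (X.card : ℝ) + ((A2.filter (fun b => ¬ FF A1 b ≤ α / 16)).card : ℝ) = A2.card := by
      exact_mod_cast h2
    have h4 := h1.trans hfew
    have h5 : ((A2.filter (fun b => ¬ FF A1 b ≤ α / 16)).card : ℝ) ≤ A2.card / 2 := by
      have : ((A2.filter (fun b => ¬ FF A1 b ≤ α / 16)).card : ℝ) * (α / 16) ≤
        (A2.card / 2) * (α / 16) := by linarith
      exact le_of_mul_le_mul_right this (by positivity)
    linarith
  have hXp : (0 : ℝ) < X.card := by linarith
  by_contra! hcon
  have hiter := PP_iter_le Γ S hSn hSB (fun x => FF A1 x + α) (e := 4 * (η ^ 2 / (1200 * k)) *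
      (bohr Γ (ρ2 + θ * ρ2)).card) (q := q) (rZ := ρ2 + θ * ρ2)
    (fun x => by have := FF_nonneg A1 x; linarith) (fun x => by have := FF_le_one A1 x; linarith)
    hq1 (by positivity) hρ3.le
    (by
      intro s hs s' hs'
      obtain ⟨E, hE, h⟩ := hrel s hs s' hs'
      refine ⟨E, hE, fun x hx hx' hxE => ?_⟩
      have := h x hx hx' hxE
      rw [hq, div_mul_eq_mul_div, le_div_iff₀ (by linarith)]
      linarith) k X ρ2 ((filter_subset _ _).trans hA2) (by linarith)
  have hl : X.card * (α / 4 + α) ≤ ∑ x ∈ X, (PP S)^[k] (fun x => FF A1 x + α) x := by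
    have : ∀ x ∈ X, α / 4 + α ≤ (PP S)^[k] (fun x => FF A1 x + α) x := by
      intro x hx
      rw [PP_add_const S hSn]
      linarith [hcon x (mem_filter.mp hx).1]
    have h := Finset.card_nsmul_le_sum _ _ _ this
    rw [nsmul_eq_mul] at h; exact h
  have hu : ∑ x ∈ X, (FF A1 x + α) ≤ X.card * (α / 16 + α) := by
    have : ∀ x ∈ X, FF A1 x + α ≤ α / 16 + α := by
      intro x hx
      linarith [(mem_filter.mp hx).2]
    have h := Finset.sum_le_card_nsmul _ _ _ this
    rw [nsmul_eq_mul] at h; exact h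
  have hu2 : q ^ k * ∑ x ∈ X, (FF A1 x + α) ≤ 111 / 100 * (X.card * (α / 16 + α)) := by
    apply mul_le_mul hqk hu _ (by norm_num)
    exact Finset.sum_nonneg fun x _ => by have := FF_nonneg A1 x; linarith
  have hu3 : k * q ^ k * (2 * (4 * (η ^ 2 / (1200 * k)) * (bohr Γ (ρ2 + θ * ρ2)).card)) ≤
      2 / 100 * α * X.card := by
    exact alg2 _ _ _ _ _ _ _ hk0 hqk (by positivity) hη hηα (by positivity) hreg2 (by linarith) hXp
  have h5 : 0 < α * X.card := by positivity
  linarith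

lemma core2 (Γ : Finset (AddChar G ℂ)) {ρ3 ρU τ θ η : ℝ} {k m ℓ : ℕ}
    (hρ3 : 0 < ρ3) (hρU : 0 < ρU) (hτ : 0 ≤ τ) (hθ : 0 < θ)
    (hη : 0 < η) (hk : 32 / η ≤ 4 ^ k)
    (hreg3 : ((bohr Γ (ρ3 + θ * ρ3)).card : ℝ) ≤ 101 / 100 * (bohr Γ ρ3).card)
    (hU3 : ℓ * ρU ≤ θ * ρ3)
    (hregU : ((bohr Γ (ρU + τ)).card : ℝ) ≤ (1 + η / 64) * (bohr Γ ρU).card)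
    (hτℓ : ℓ * τ ≤ η / 16)
    (hℓ : 5 ≤ (η / 2) ^ m * Real.exp (ℓ / 24))
    (A S : Finset G) (hA : A.Nonempty) (hSB : S ⊆ bohr Γ ρ3) (hSn : S.Nonempty)
    (hS : ((bohr Γ ρ3).card : ℝ) * (η / 2) ^ m ≤ 2 * S.card) :
    ∃ Γ' : Finset (AddChar G ℂ), Γ ⊆ Γ' ∧ Γ'.card ≤ Γ.card + ℓ ∧ ∀ x : G, ∀ v ∈ bohr Γ' τ,
      (PP S)^[k] (FF A) (x + v) ≤ (PP S)^[k] (FF A) x + η / 8 := by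
  classical
  have hB3 : (0 : ℝ) < (bohr Γ ρ3).card := bohr_card_pos hρ3.le
  obtain ⟨l, hl, hchang⟩ := chang Γ hρU.le ℓ (ρ := ρ3) (ρp := ρ3 + θ * ρ3) (by linarith) hρ3.le
    S hSn hSB (by
      have h1 := mul_le_mul_of_nonneg_right hS (Real.exp_pos ((ℓ : ℝ) / 24)).le
      have h2 : ((bohr Γ ρ3).card : ℝ) * 5 ≤
          ((bohr Γ ρ3).card : ℝ) * ((η / 2) ^ m * Real.exp (ℓ / 24)) := by gcongr
      linarith)
  refine ⟨Γ ∪ l.toFinset, subset_union_left, ?_, ?_⟩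
  · refine (card_union_le _ _).trans ?_
    have := List.toFinset_card_le l
    omega
  intro x v hv
  apply PP_shift A S hA
  intro χ
  have hv1 : v ∈ bohr Γ τ := bohr_anti subset_union_left hv
  have hv2 : ∀ γ ∈ l, ‖1 - γ v‖ ≤ τ := by
    intro γ hγ
    exact mem_bohr.mp hv γ (by simp [hγ])
  by_cases hχ : 1 / 2 ≤ ‖ft S χ‖
  · obtain ⟨ψ, hψ, hh⟩ := hchang χ hχ
    have h1 := Sp_norm hψ hτ hv2
    have h2 : ‖1 - ψ v‖ ≤ η / 16 := by
      refine h1.trans (le_trans ?_ hτℓ)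
      gcongr
    have h3 : ‖1 - χ v‖ ≤ η / 16 + η / 16 := by
      apply char_combine χ ψ v _ _ h2
      rcases hh with hh | hh
      · left
        have := char_close Γ hρU.le hτ hregU v hv1 _ hh
        linarith
      · right
        have := char_close Γ hρU.le hτ hregU v hv1 _ hh
        linarith
    have h4 : ‖ft S χ‖ ^ (2 * k) ≤ 1 := pow_le_one₀ (norm_nonneg _) (norm_ft_le_one _ _)
    have h5 := mul_le_mul h4 h3 (norm_nonneg _) zero_le_one
    linarith
  · push Not at hχ
    have h1 : ‖ft S χ‖ ^ (2 * k) ≤ (1 / 2) ^ (2 * k) := by gcongr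
    have h2 : ‖1 - χ v‖ ≤ 2 := by
      refine (norm_sub_le _ _).trans ?_
      rw [AddChar.norm_apply]; norm_num
    have h3 := mul_le_mul h1 h2 (norm_nonneg _) (by positivity)
    refine h3.trans ?_
    rw [pow_mul]
    have e : ((1 / 2 : ℝ) ^ 2) ^ k = 1 / 4 ^ k := by rw [← one_div_pow]; norm_num
    rw [e, div_mul_eq_mul_div, div_le_iff₀ (by positivity)]
    rw [div_le_iff₀ hη] at hk
    linarith

lemma core3 (Γ Γ' : Finset (AddChar G ℂ)) (hΓ : Γ ⊆ Γ') {ρ1 ρ2 ρ3 ρD θ α η : ℝ} {k : ℕ}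
    (hρ1 : 0 < ρ1) (hρ2 : 0 < ρ2) (hρ3 : 0 < ρ3) (hρD : 0 < ρD) (hθ : 0 < θ) (hθ1 : θ ≤ 1)
    (hη : 0 < η) (hηα : η ≤ α)
    (hreg1 : ((bohr Γ (ρ1 + θ * ρ1)).card : ℝ) ≤ 101 / 100 * (bohr Γ ρ1).card)
    (h21 : ρ2 ≤ θ * ρ1 / 8) (h32k : k * (2 * ρ3) ≤ θ * ρ2) (hD : ρD ≤ θ * ρ1 / 8)
    (A1 S : Finset G) (hA1 : A1 ⊆ bohr Γ ρ1) (hSB : S ⊆ bohr Γ ρ3) (hSn : S.Nonempty)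
    (hd1 : 88 / 100 * α * (bohr Γ ρ1).card ≤ A1.card)
    (x : G) (hx2 : x ∈ bohr Γ ρ2)
    (hx : (PP S)^[k] (FF A1) x ≤ α / 4)
    (hshift : ∀ x : G, ∀ v ∈ bohr Γ' (2 * ρD),
      (PP S)^[k] (FF A1) (x + v) ≤ (PP S)^[k] (FF A1) x + η / 8) :
    ∃ y, 11 / 10 * α * (bohr Γ' ρD).card < gg A1 (bohr Γ' ρD) y := by
  have hα : 0 < α := by linarith
  set D := bohr Γ' ρD with hDdef
  have hDp : (0 : ℝ) < D.card := bohr_card_pos hρD.le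
  have hB1 : (0 : ℝ) < (bohr Γ ρ1).card := bohr_card_pos hρ1.le
  have hA1p : (0 : ℝ) < A1.card := lt_of_lt_of_le (by positivity) hd1
  have hA1n : A1.Nonempty := card_pos.mp (by exact_mod_cast hA1p)
  by_contra! hcon
  have key : ∀ x' ∈ bohr Γ (ρ2 + θ * ρ2), 8 / 10 * α * (D.card : ℝ) ^ 2 ≤
      ∑ p ∈ D ×ˢ D, FF A1 (x' + (p.1 + p.2)) := by
    intro x' hx'
    have h := gg_lower A1 D (bohr Γ (ρ1 + θ * ρ1)) hA1n x' _ hcon (by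
      intro a ha v hv
      have hv' : v ∈ bohr Γ ρD := bohr_anti hΓ hv
      have h1 : v + v ∈ bohr Γ (2 * ρD) := bohr_add hv' hv' (by linarith)
      have h2 : a - (v + v) ∈ bohr Γ (ρ1 + θ * ρ1 / 4) := bohr_sub (hA1 ha) h1 (by linarith)
      have h3 : x' + x' ∈ bohr Γ (θ * ρ1 / 2) := bohr_add hx' hx' (by nlinarith)
      have h4 : 0 < θ * ρ1 := by positivity
      exact ⟨bohr_mono (by linarith) h2, bohr_sub h3 h2 (by linarith)⟩)
    rw [Finset.sum_product]
    simp only [← Finset.sum_mul] at h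
    have h5 : α * ((bohr Γ (ρ1 + θ * ρ1)).card : ℝ) ≤ 101 / 88 * A1.card := by
      have := mul_le_mul_of_nonneg_left hreg1 hα.le
      linarith
    have h6 : 73 / 100 * (A1.card * D.card : ℝ) ≤
        2 * (A1.card * D.card) - 11 / 10 * α * D.card * (bohr Γ (ρ1 + θ * ρ1)).card := by
      have := mul_le_mul_of_nonneg_right h5 hDp.le
      have h7 : 0 < (A1.card : ℝ) * D.card := by positivity
      nlinarith
    have h8 : 11 / 10 * α * D.card * (73 / 100 * (A1.card * D.card : ℝ)) ≤
        (∑ v ∈ D, ∑ v' ∈ D, FF A1 (x' + (v + v'))) * A1.card :=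
      le_trans (by gcongr) h
    have h9 : (11 / 10 * α * D.card * (73 / 100 * D.card)) * (A1.card : ℝ) ≤
        (∑ v ∈ D, ∑ v' ∈ D, FF A1 (x' + (v + v'))) * A1.card := by linarith
    have h10 := le_of_mul_le_mul_right h9 hA1p
    have h11 : 0 < α * (D.card : ℝ) ^ 2 := by positivity
    nlinarith
  have h1 := PP_iter_ge Γ S hSn hSB hρ3.le (fun y => ∑ p ∈ D ×ˢ D, FF A1 (y + (p.1 + p.2))) key
    k x ρ2 hx2 (by linarith)
  rw [PP_iter_shift_sum S (D ×ˢ D) (fun p => p.1 + p.2) (FF A1) k x] at h1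
  have h2 : ∀ p ∈ D ×ˢ D, (PP S)^[k] (FF A1) (x + (p.1 + p.2)) ≤ 3 / 8 * α := by
    intro p hp
    rw [mem_product] at hp
    have := hshift x (p.1 + p.2) (bohr_add hp.1 hp.2 (by linarith))
    linarith
  have h3 := Finset.sum_le_card_nsmul _ _ _ h2
  rw [nsmul_eq_mul, card_product] at h3
  push_cast at h3
  have h11 : 0 < α * (D.card : ℝ) ^ 2 := by positivity
  nlinarith

end VC


namespace VC

open Finset

set_option linter.unusedSectionVars false
set_option linter.unusedVariables false

variable {G : Type*} [AddCommGroup G] [Fintype G] [DecidableEq G]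

lemma reg_exists (Γ : Finset (AddChar G ℂ)) {D : ℕ} (hD : 1 ≤ D) (hΓ : Γ.card ≤ D) {r θ : ℝ}
    (hr : 0 < r) (hθ : θ = 1 / (1600 * D)) :
    ∃ ρ, r / 2 ≤ ρ ∧ ρ ≤ r ∧ ((bohr Γ (ρ + θ * ρ)).card : ℝ) ≤ 101 / 100 * (bohr Γ ρ).card := by
  have hD0 : (0 : ℝ) < D := by exact_mod_cast hD
  obtain ⟨ρ, h1, h2, h3⟩ := bohr_regular Γ hD hΓ hr (ε := 1 / 100) (by norm_num) (by norm_num)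
  refine ⟨ρ, h1, h2, ?_⟩
  have h4 : bohr Γ (ρ + θ * ρ) ⊆ bohr Γ (ρ + 1 / 100 * r / (16 * D)) := by
    apply bohr_mono
    have : 1 / 100 * r / (16 * D) = θ * r := by rw [hθ]; field_simp; norm_num
    rw [this]
    have : 0 < θ := by rw [hθ]; positivity
    gcongr
  have h5 : ((bohr Γ (ρ + θ * ρ)).card : ℝ) ≤ (bohr Γ (ρ + 1 / 100 * r / (16 * D))).card := by
    exact_mod_cast card_le_card h4
  linarith

set_option maxHeartbeats 1000000 in
lemma step_incr (Γ : Finset (AddChar G ℂ)) {ρ1 ρ2 θ α η : ℝ} {k m ℓ D : ℕ}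
    (hD : 1 ≤ D) (hΓ : Γ.card + ℓ ≤ D) (hθD : θ = 1 / (1600 * D)) (hℓ1 : 1 ≤ ℓ)
    (hρ1 : 0 < ρ1) (hρ2 : 0 < ρ2) (hρ2' : ρ2 ≤ 2)
    (hη : 0 < η) (hηα : η ≤ α) (hα1 : α ≤ 1) (hk1 : 1 ≤ k) (hm : 0 < m)
    (hreg1 : ((bohr Γ (ρ1 + θ * ρ1)).card : ℝ) ≤ 101 / 100 * (bohr Γ ρ1).card)
    (hreg2 : ((bohr Γ (ρ2 + θ * ρ2)).card : ℝ) ≤ 101 / 100 * (bohr Γ ρ2).card)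
    (h21 : ρ2 ≤ θ * ρ1 / 8)
    (hk : 32 / η ≤ 4 ^ k)
    (hβ : 2 * Real.exp (-(m * η * (1 / (32 * k : ℝ)) ^ 2 / 4)) ≤ η ^ 2 / (1200 * k))
    (hℓ : 5 ≤ (η / 2) ^ m * Real.exp (ℓ / 24))
    (A1 A2 : Finset G) (hA1 : A1 ⊆ bohr Γ ρ1) (hA2 : A2 ⊆ bohr Γ ρ2)
    (hd1 : 88 / 100 * α * (bohr Γ ρ1).card ≤ A1.card)
    (hd2 : 88 / 100 * α * (bohr Γ ρ2).card ≤ A2.card)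
    (hfew : ∑ b ∈ A2, FF A1 b ≤ α / 32 * A2.card) :
    ∃ (Γ' : Finset (AddChar G ℂ)) (ρD : ℝ), Γ'.card ≤ Γ.card + ℓ ∧
      η * θ ^ 2 * ρ2 / (16384 * D * ℓ * k) ≤ ρD ∧ ρD ≤ ρ2 ∧
      ((bohr Γ' (ρD + θ * ρD)).card : ℝ) ≤ 101 / 100 * (bohr Γ' ρD).card ∧
      ∃ y, 11 / 10 * α * (bohr Γ' ρD).card < gg A1 (bohr Γ' ρD) y := by
  have hα : 0 < α := by linarith
  have hD1 : (1 : ℝ) ≤ D := by exact_mod_cast hD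
  have hk' : (1 : ℝ) ≤ k := by exact_mod_cast hk1
  have hl' : (1 : ℝ) ≤ ℓ := by exact_mod_cast hℓ1
  have hD0 : (0 : ℝ) < D := by linarith
  have hk0 : (0 : ℝ) < k := by linarith
  have hl0 : (0 : ℝ) < ℓ := by linarith
  have hθ : 0 < θ := by rw [hθD]; positivity
  have hθ1 : θ ≤ 1 := by
    rw [hθD, div_le_one (by positivity)]; linarith
  have hΓD : Γ.card ≤ D := by omega
  obtain ⟨ρ3, h3a, h3b, hreg3⟩ := reg_exists Γ hD hΓD (r := θ * ρ2 / (2 * k)) (by positivity) hθD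
  have hρ3 : 0 < ρ3 := lt_of_lt_of_le (by positivity) h3a
  have h32k : k * (2 * ρ3) ≤ θ * ρ2 := by
    have := h3b
    rw [le_div_iff₀ (by positivity)] at this; linarith
  have hρ32 : ρ3 ≤ ρ2 := by
    have e1 : θ * ρ2 ≤ ρ2 := mul_le_of_le_one_left hρ2.le hθ1
    have e2 : ρ3 ≤ k * ρ3 := le_mul_of_one_le_left hρ3.le hk'
    linarith
  obtain ⟨S, hSB, hSn, hS, x, hxA, hx⟩ := core1 Γ hρ1 hρ2 hρ3 hθ hθ1 hη hηα hα1 hk1 hm hreg1 hreg2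
    h21 h3b hβ A1 A2 hA1 hA2 hd1 hd2 hfew
  have hA1p : (0 : ℝ) < A1.card := by
    have : (0 : ℝ) < (bohr Γ ρ1).card := bohr_card_pos hρ1.le
    exact lt_of_lt_of_le (by positivity) hd1
  have hA1n : A1.Nonempty := card_pos.mp (by exact_mod_cast hA1p)
  set r4 := θ * ρ3 / ℓ with hr4
  have hr4p : 0 < r4 := by positivity
  have hr4l : ℓ * r4 = θ * ρ3 := by rw [hr4]; field_simp
  obtain ⟨ρU, hUa, hUb, hregU⟩ := bohr_regular Γ hD hΓD hr4p (ε := η / 64) (by positivity)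
    (by linarith)
  have hρU : 0 < ρU := by linarith
  set τ := η / 64 * r4 / (16 * D) with hτ
  have hτ0 : 0 < τ := by positivity
  have hτr : τ ≤ η / 64 * r4 / 16 := by
    rw [hτ]
    apply div_le_div_of_nonneg_left (by positivity) (by norm_num) (by linarith)
  have hθρ3' : θ * ρ3 ≤ ρ3 := mul_le_of_le_one_left hρ3.le hθ1
  have hθρ3 : θ * ρ3 ≤ 2 := by linarith
  obtain ⟨Γ', hΓΓ', hΓ'c, hshift⟩ := core2 Γ (τ := τ) (k := k) hρ3 hρU hτ0.le hθ hη hk hreg3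
    (by rw [← hr4l]; gcongr) hregU
    (by
      have : ℓ * τ ≤ ℓ * (η / 64 * r4 / 16) := by gcongr
      have e1 : ℓ * (η / 64 * r4 / 16) = η / 1024 * (ℓ * r4) := by ring
      have e2 : η / 1024 * (ℓ * r4) ≤ η / 1024 * 2 := by rw [hr4l]; gcongr
      linarith) hℓ A1 S hA1n hSB hSn hS
  obtain ⟨ρD, hDa, hDb, hregD⟩ := reg_exists Γ' hD (by omega) (r := τ / 2) (by positivity) hθD
  have hρD : 0 < ρD := lt_of_lt_of_le (by positivity) hDa
  have hr43 : r4 ≤ ρ3 := by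
    have e1 : r4 ≤ ℓ * r4 := le_mul_of_one_le_left hr4p.le hl'
    linarith
  have hρDr : ρD ≤ r4 := by
    have e1 : η * r4 ≤ r4 := mul_le_of_le_one_left hr4p.le (by linarith)
    linarith
  refine ⟨Γ', ρD, hΓ'c, ?_, by linarith, hregD, ?_⟩
  · refine le_trans ?_ hDa
    have h1 : τ / 2 / 2 = η * θ * ρ3 / (4096 * D * ℓ) := by
      rw [hτ, hr4]; field_simp; norm_num
    rw [h1]
    have h2 : η * θ ^ 2 * ρ2 / (16384 * D * ℓ * k) =
        η * θ * (θ * ρ2 / (2 * k) / 2) / (4096 * D * ℓ) := by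
      field_simp; norm_num
    rw [h2]
    gcongr
  · exact core3 Γ Γ' hΓΓ' hρ1 hρ2 hρ3 hρD hθ hθ1 hη hηα hreg1 h21 h32k (by linarith) A1 S hA1 hSB
      hSn hd1 x (hA2 hxA) hx (fun x v hv => hshift x v (bohr_mono (by linarith) hv))

set_option maxHeartbeats 1000000 in
lemma step (hdbl : Function.Injective (fun x : G => x + x))
    (Γ : Finset (AddChar G ℂ)) {ρ θ α η lam : ℝ} {k m ℓ D : ℕ}
    (hD : 1 ≤ D) (hΓ : Γ.card + ℓ ≤ D) (hθD : θ = 1 / (1600 * D)) (hℓ1 : 1 ≤ ℓ)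
    (hρ : 0 < ρ) (hρ2 : ρ ≤ 2)
    (hη : 0 < η) (hηα : η ≤ α) (hα1 : α ≤ 1) (hk1 : 1 ≤ k) (hm : 0 < m)
    (hreg : ((bohr Γ (ρ + θ * ρ)).card : ℝ) ≤ 101 / 100 * (bohr Γ ρ).card)
    (hk : 32 / η ≤ 4 ^ k)
    (hβ : 2 * Real.exp (-(m * η * (1 / (32 * k : ℝ)) ^ 2 / 4)) ≤ η ^ 2 / (1200 * k))
    (hℓ : 5 ≤ (η / 2) ^ m * Real.exp (ℓ / 24))
    (hlam : lam = η * θ ^ 4 / (1048576 * D * ℓ * k))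
    (A : Finset G) (hA : α * (bohr Γ ρ).card ≤ ((bohr Γ ρ).filter (fun x => x ∈ A)).card) :
    (η ^ 3 / 50 * ((bohr Γ (lam * ρ)).card : ℝ) ^ 2 ≤ TT A) ∨
    ∃ (Γ' : Finset (AddChar G ℂ)) (ρ' : ℝ) (A' : Finset G), Γ'.card ≤ Γ.card + ℓ ∧
      lam * ρ ≤ ρ' ∧ ρ' ≤ 2 ∧
      ((bohr Γ' (ρ' + θ * ρ')).card : ℝ) ≤ 101 / 100 * (bohr Γ' ρ').card ∧ TT A' ≤ TT A ∧
      11 / 10 * α * (bohr Γ' ρ').card ≤ ((bohr Γ' ρ').filter (fun x => x ∈ A')).card := by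
  have hα : 0 < α := by linarith
  have hD1 : (1 : ℝ) ≤ D := by exact_mod_cast hD
  have hk' : (1 : ℝ) ≤ k := by exact_mod_cast hk1
  have hl' : (1 : ℝ) ≤ ℓ := by exact_mod_cast hℓ1
  have hD0 : (0 : ℝ) < D := by linarith
  have hk0 : (0 : ℝ) < k := by linarith
  have hl0 : (0 : ℝ) < ℓ := by linarith
  have hθ : 0 < θ := by rw [hθD]; positivity
  have hθ1 : θ ≤ 1 := by
    rw [hθD, div_le_one (by positivity)]; linarith
  have hΓD : Γ.card ≤ D := by omega
  obtain ⟨ρ1, h1a, h1b, hreg1⟩ := reg_exists Γ hD hΓD (r := θ * ρ / 2) (by positivity) hθD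
  have hρ1 : 0 < ρ1 := lt_of_lt_of_le (by positivity) h1a
  obtain ⟨ρ2, h2a, h2b, hreg2⟩ := reg_exists Γ hD hΓD (r := θ * ρ1 / 8) (by positivity) hθD
  have hρ2 : 0 < ρ2 := lt_of_lt_of_le (by positivity) h2a
  have hθρ : θ * ρ ≤ ρ := mul_le_of_le_one_left hρ.le hθ1
  have hθρ1 : θ * ρ1 ≤ ρ1 := mul_le_of_le_one_left hρ1.le hθ1
  have hρ1' : ρ1 ≤ 2 := by linarith
  have hρ21 : ρ2 ≤ ρ1 := by linarith
  have hchain : θ ^ 2 * ρ / 64 ≤ ρ2 := by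
    have : θ * (θ * ρ / 2 / 2) ≤ θ * ρ1 := by gcongr
    linarith
  have hlamρ : lam * ρ = η * θ ^ 2 * (θ ^ 2 * ρ / 64) / (16384 * D * ℓ * k) := by
    rw [hlam]; field_simp; norm_num
  have hlam2 : lam * ρ ≤ η * θ ^ 2 * ρ2 / (16384 * D * ℓ * k) := by
    rw [hlamρ]; gcongr
  have hlam3 : lam * ρ ≤ ρ2 := by
    refine hlam2.trans ?_
    rw [div_le_iff₀ (by positivity), mul_comm ρ2]
    apply mul_le_mul_of_nonneg_right _ hρ2.le
    have e1 : η * θ ^ 2 ≤ 1 := mul_le_one₀ (by linarith) (by positivity) (pow_le_one₀ hθ.le hθ1)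
    have e2 : (1 : ℝ) ≤ D * ℓ * k := one_le_mul_of_one_le_of_one_le
      (one_le_mul_of_one_le_of_one_le hD1 hl') hk'
    linarith
  have hB : (0 : ℝ) < (bohr Γ ρ).card := bohr_card_pos hρ.le
  have hB1 : (0 : ℝ) < (bohr Γ ρ1).card := bohr_card_pos hρ1.le
  have hB2 : (0 : ℝ) < (bohr Γ ρ2).card := bohr_card_pos hρ2.le
  set A0 := (bohr Γ ρ).filter (fun x => x ∈ A) with hA0
  set X := bohr Γ (ρ + θ * ρ) with hX
  have hA0b : A0 ⊆ bohr Γ ρ := filter_subset _ _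
  have hs1 := ct_sum A0 (bohr Γ ρ1) X (fun a ha b hb => bohr_sub (hA0b ha) hb (by linarith))
  have hs2 := ct_sum A0 (bohr Γ ρ2) X (fun a ha b hb => bohr_sub (hA0b ha) hb (by linarith))
  obtain ⟨y, hy⟩ : ∃ y, 198 / 100 * α ≤ (ct A0 (bohr Γ ρ1) y : ℝ) / (bohr Γ ρ1).card +
      (ct A0 (bohr Γ ρ2) y : ℝ) / (bohr Γ ρ2).card := by
    by_contra! hcon
    have h1 : ∑ y ∈ X, ((ct A0 (bohr Γ ρ1) y : ℝ) / (bohr Γ ρ1).card +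
      (ct A0 (bohr Γ ρ2) y : ℝ) / (bohr Γ ρ2).card) < ∑ y ∈ X, 198 / 100 * α := by
      apply Finset.sum_lt_sum_of_nonempty
      · exact ⟨0, zero_mem_bohr (by positivity)⟩
      · intro y _; exact hcon y
    rw [Finset.sum_add_distrib, ← Finset.sum_div, ← Finset.sum_div, hs1, hs2,
      mul_div_cancel_right₀ _ hB1.ne', mul_div_cancel_right₀ _ hB2.ne', Finset.sum_const,
      nsmul_eq_mul] at h1
    have h2 : (X.card : ℝ) * (198 / 100 * α) ≤ 101 / 100 * (bohr Γ ρ).card * (198 / 100 * α) := by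
      gcongr
    have h3 : 0 < α * (bohr Γ ρ).card := by positivity
    linarith
  set Ay := univ.filter (fun x => y + x ∈ A) with hAy
  have hTy : TT Ay ≤ TT A := TT_le A Ay (fun x => y + x) (add_right_injective y)
    (by intro a b; abel) (by intro a ha; exact (mem_filter.mp ha).2)
  have hct : ∀ r : ℝ, (ct A0 (bohr Γ r) y : ℝ) ≤ ((bohr Γ r).filter (fun x => x ∈ Ay)).card := by
    intro r
    unfold ct
    norm_cast
    apply card_le_card
    intro x hx
    simp only [mem_filter, hA0, hAy, mem_univ, true_and] at hx ⊢
    exact ⟨hx.1, hx.2.2⟩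
  have hcr1 := hct ρ1
  have hcr2 := hct ρ2
  set A1 := (bohr Γ ρ1).filter (fun x => x ∈ Ay) with hA1
  set A2 := (bohr Γ ρ2).filter (fun x => x ∈ Ay) with hA2
  by_cases hi1 : 11 / 10 * α * (bohr Γ ρ1).card ≤ A1.card
  · exact Or.inr ⟨Γ, ρ1, Ay, by omega, by linarith, hρ1', hreg1, hTy, hi1⟩
  by_cases hi2 : 11 / 10 * α * (bohr Γ ρ2).card ≤ A2.card
  · exact Or.inr ⟨Γ, ρ2, Ay, by omega, hlam3, by linarith, hreg2, hTy, hi2⟩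
  push Not at hi1 hi2
  have hq1 : (ct A0 (bohr Γ ρ1) y : ℝ) / (bohr Γ ρ1).card ≤ 11 / 10 * α := by
    rw [div_le_iff₀ hB1]; linarith
  have hq2 : (ct A0 (bohr Γ ρ2) y : ℝ) / (bohr Γ ρ2).card ≤ 11 / 10 * α := by
    rw [div_le_iff₀ hB2]; linarith
  have hd1 : 88 / 100 * α * (bohr Γ ρ1).card ≤ A1.card := by
    refine le_trans ?_ hcr1
    rw [← le_div_iff₀ hB1]; linarith
  have hd2 : 88 / 100 * α * (bohr Γ ρ2).card ≤ A2.card := by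
    refine le_trans ?_ hcr2
    rw [← le_div_iff₀ hB2]; linarith
  by_cases hfew : ∑ b ∈ A2, FF A1 b ≤ α / 32 * A2.card
  · obtain ⟨Γ', ρD, c1, c2, c3, c4, z, hz⟩ := step_incr Γ hD hΓ hθD hℓ1 hρ1 hρ2 (by linarith) hη hηα
      hα1 hk1 hm hreg1 hreg2 h2b hk hβ hℓ A1 A2 (filter_subset _ _) (filter_subset _ _) hd1 hd2 hfew
    refine Or.inr ⟨Γ', ρD, univ.filter (fun x => z + (x + x) ∈ Ay), c1, hlam2.trans c2, by linarith,
      c4, le_trans (TT_le Ay _ (fun x => z + (x + x)) ?_ ?_ ?_) hTy, ?_⟩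
    · intro a b h; exact hdbl (add_right_injective z h)
    · intro a b; abel
    · intro a ha; exact (mem_filter.mp ha).2
    · refine hz.le.trans ?_
      unfold gg
      norm_cast
      apply card_le_card
      intro x hx
      rw [mem_filter] at hx
      exact mem_filter.mpr ⟨hx.1, mem_filter.mpr ⟨mem_univ _, (mem_filter.mp hx.2).2⟩⟩
  · left
    push Not at hfew
    have h1 := TT_ge Ay A1 A2 (fun x hx => (mem_filter.mp hx).2) (fun x hx => (mem_filter.mp hx).2)
    rw [← Finset.mul_sum] at h1
    have h2 : (TT Ay : ℝ) ≤ TT A := by exact_mod_cast hTy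
    refine le_trans ?_ (h1.trans h2)
    have hB' : ((bohr Γ (lam * ρ)).card : ℝ) ≤ (bohr Γ ρ2).card := by
      exact_mod_cast card_le_card (bohr_mono hlam3)
    have hB'' : ((bohr Γ ρ2).card : ℝ) ≤ (bohr Γ ρ1).card := by
      exact_mod_cast card_le_card (bohr_mono hρ21)
    have e1 : 88 / 100 * α * (bohr Γ ρ2).card ≤ A1.card := le_trans (by gcongr) hd1
    calc η ^ 3 / 50 * ((bohr Γ (lam * ρ)).card : ℝ) ^ 2 ≤ α ^ 3 / 50 * ((bohr Γ ρ2).card : ℝ) ^ 2 := by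
          gcongr
      _ ≤ (88 / 100 * α * (bohr Γ ρ2).card) * (α / 32 * (88 / 100 * α * (bohr Γ ρ2).card)) := by
          have : 0 ≤ α ^ 3 * ((bohr Γ ρ2).card : ℝ) ^ 2 := by positivity
          linarith
      _ ≤ A1.card * (α / 32 * A2.card) := by gcongr
      _ ≤ A1.card * ∑ b ∈ A2, FF A1 b := by gcongr

end VC


namespace VC

open Finset

set_option linter.unusedSectionVars false
set_option linter.unusedVariables false

variable {G : Type*} [AddCommGroup G] [Fintype G] [DecidableEq G]

lemma iterate (hdbl : Function.Injective (fun x : G => x + x))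
    {θ η lam : ℝ} {k m ℓ D : ℕ}
    (hD : 1 ≤ D) (hθD : θ = 1 / (1600 * D)) (hℓ1 : 1 ≤ ℓ)
    (hη : 0 < η) (hk1 : 1 ≤ k) (hm : 0 < m)
    (hk : 32 / η ≤ 4 ^ k)
    (hβ : 2 * Real.exp (-(m * η * (1 / (32 * k : ℝ)) ^ 2 / 4)) ≤ η ^ 2 / (1200 * k))
    (hℓ : 5 ≤ (η / 2) ^ m * Real.exp (ℓ / 24))
    (hlam : lam = η * θ ^ 4 / (1048576 * D * ℓ * k)) (hlam0 : 0 < lam) (hlam1 : lam ≤ 1) (n : ℕ) :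
    ∀ (Γ : Finset (AddChar G ℂ)) (ρ α : ℝ) (A : Finset G), Γ.card + n * ℓ ≤ D → 0 < ρ → ρ ≤ 2 →
      η ≤ α → 1 < (11 / 10) ^ n * α →
      ((bohr Γ (ρ + θ * ρ)).card : ℝ) ≤ 101 / 100 * (bohr Γ ρ).card →
      α * (bohr Γ ρ).card ≤ ((bohr Γ ρ).filter (fun x => x ∈ A)).card →
      ∃ (Γ' : Finset (AddChar G ℂ)) (ρ' : ℝ), Γ'.card ≤ D ∧ lam ^ n * ρ ≤ ρ' ∧
        η ^ 3 / 50 * ((bohr Γ' ρ').card : ℝ) ^ 2 ≤ TT A := by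
  have hα1 : ∀ (Γ : Finset (AddChar G ℂ)) (ρ α : ℝ) (A : Finset G), 0 < ρ →
      α * (bohr Γ ρ).card ≤ ((bohr Γ ρ).filter (fun x => x ∈ A)).card → α ≤ 1 := by
    intro Γ ρ α A hρ h
    have h1 : (0 : ℝ) < (bohr Γ ρ).card := bohr_card_pos hρ.le
    have h2 : (((bohr Γ ρ).filter (fun x => x ∈ A)).card : ℝ) ≤ (bohr Γ ρ).card := by
      exact_mod_cast card_filter_le _ _
    have h3 : α * (bohr Γ ρ).card ≤ 1 * (bohr Γ ρ).card := by linarith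
    exact le_of_mul_le_mul_right h3 h1
  induction n with
  | zero =>
    intro Γ ρ α A hΓ hρ hρ2 hηα hn hreg hA
    have := hα1 Γ ρ α A hρ hA
    simp at hn
    linarith
  | succ n ih =>
    intro Γ ρ α A hΓ hρ hρ2 hηα hn hreg hA
    have hα := hα1 Γ ρ α A hρ hA
    rw [add_mul, one_mul] at hΓ
    rcases step hdbl Γ hD (by omega) hθD hℓ1 hρ hρ2 hη hηα hα hk1 hm hreg hk hβ hℓ hlam A hA with
      h | ⟨Γ', ρ', A', h1, h2, h3, h4, h5, h6⟩
    · refine ⟨Γ, lam * ρ, by omega, ?_, h⟩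
      have : lam ^ n ≤ 1 := pow_le_one₀ hlam0.le hlam1
      rw [pow_succ, mul_assoc]
      exact mul_le_of_le_one_left (by positivity) this
    · obtain ⟨Γ'', ρ'', g1, g2, g3⟩ := ih Γ' ρ' (11 / 10 * α) A' (by omega)
        (lt_of_lt_of_le (by positivity) h2) h3 (by linarith)
        (by rw [pow_succ] at hn; linarith) h4 h6
      refine ⟨Γ'', ρ'', g1, ?_, g3.trans (by exact_mod_cast h5)⟩
      refine le_trans ?_ g2
      rw [pow_succ, mul_assoc]
      gcongr

lemma main_count (hdbl : Function.Injective (fun x : G => x + x))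
    {θ η lam : ℝ} {k m ℓ D n κ : ℕ}
    (hD : 1 ≤ D) (hθD : θ = 1 / (1600 * D)) (hℓ1 : 1 ≤ ℓ)
    (hη : 0 < η) (hk1 : 1 ≤ k) (hm : 0 < m)
    (hk : 32 / η ≤ 4 ^ k)
    (hβ : 2 * Real.exp (-(m * η * (1 / (32 * k : ℝ)) ^ 2 / 4)) ≤ η ^ 2 / (1200 * k))
    (hℓ : 5 ≤ (η / 2) ^ m * Real.exp (ℓ / 24))
    (hlam : lam = η * θ ^ 4 / (1048576 * D * ℓ * k)) (hlam0 : 0 < lam) (hlam1 : lam ≤ 1)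
    (hnD : n * ℓ ≤ D) (hn : 1 < (11 / 10) ^ n * η) (hκ : 1 / lam ≤ 2 ^ κ)
    (A : Finset G) (hA : η * Fintype.card G ≤ A.card) :
    η ^ 3 / 50 * ((Fintype.card G : ℝ) ^ 2) ≤ TT A * (128 : ℝ) ^ (2 * (D * (n * κ))) := by
  have hu : ∀ r : ℝ, bohr (∅ : Finset (AddChar G ℂ)) r = univ := by
    intro r; ext x; simp [mem_bohr]
  obtain ⟨Γ, ρ, h1, h2, h3⟩ := iterate hdbl hD hθD hℓ1 hη hk1 hm hk hβ hℓ hlam hlam0 hlam1 n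
    ∅ 2 η A (by simpa using hnD) (by norm_num) le_rfl le_rfl hn
    (by rw [hu, hu]
        have : (0 : ℝ) ≤ (univ : Finset G).card := by positivity
        linarith)
    (by rw [hu]; simpa using hA)
  have h4 : (2 : ℝ) / 2 ^ (n * κ) ≤ ρ := by
    refine le_trans ?_ h2
    have h5 : 1 / (2 : ℝ) ^ κ ≤ lam := by
      rw [div_le_iff₀ (by positivity)]
      rw [div_le_iff₀ hlam0] at hκ
      linarith
    have h6 : (1 / (2 : ℝ) ^ κ) ^ n ≤ lam ^ n := by gcongr
    rw [one_div_pow, ← pow_mul, mul_comm κ n] at h6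
    have : (2 : ℝ) / 2 ^ (n * κ) = 1 / 2 ^ (n * κ) * 2 := by ring
    rw [this]; linarith
  have h5 := bohr_size Γ (n * κ)
  have h6 : ((bohr Γ (2 / 2 ^ (n * κ))).card : ℝ) ≤ (bohr Γ ρ).card := by
    exact_mod_cast card_le_card (bohr_mono h4)
  have h7 : (Fintype.card G : ℝ) ≤ 128 ^ (D * (n * κ)) * (bohr Γ ρ).card := by
    have h8 : (Fintype.card G : ℝ) ≤ 128 ^ (Γ.card * (n * κ)) * (bohr Γ (2 / 2 ^ (n * κ))).card := by
      exact_mod_cast h5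
    refine h8.trans ?_
    gcongr
    norm_num
  calc η ^ 3 / 50 * ((Fintype.card G : ℝ) ^ 2) ≤
      η ^ 3 / 50 * ((128 ^ (D * (n * κ)) * (bohr Γ ρ).card) ^ 2) := by gcongr
    _ = (η ^ 3 / 50 * ((bohr Γ ρ).card : ℝ) ^ 2) * (128 : ℝ) ^ (2 * (D * (n * κ))) := by
        rw [mul_comm 2 (D * (n * κ)), pow_mul]; ring
    _ ≤ _ := by gcongr

end VC


namespace VC

open Finset

set_option linter.unusedSectionVars false
set_option linter.unusedVariables false

variable {G : Type*} [AddCommGroup G] [Fintype G] [DecidableEq G]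

lemma ceil_bd {x c : ℝ} (hx : 0 ≤ x) (hc : x + 1 ≤ c) : ((⌈x⌉₊ : ℕ) : ℝ) ≤ c :=
  (Nat.ceil_lt_add_one hx).le.trans hc

lemma le_exp_of (t : ℝ) : t ≤ Real.exp t := by have := Real.add_one_le_exp t; linarith

lemma four_exp (x : ℕ) (c : ℝ) (h : c ≤ Real.exp x) : c ≤ 4 ^ x := by
  refine h.trans ?_
  rw [← mul_one (x : ℝ), Real.exp_nat_mul]
  gcongr
  have := Real.exp_one_lt_d9; linarith

lemma exp_two_ge (m : ℕ) : (2 : ℝ) ^ m ≤ Real.exp m := by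
  rw [← mul_one (m : ℝ), Real.exp_nat_mul]
  gcongr
  have := Real.exp_one_gt_d9; linarith

lemma t14 (t : ℝ) (ht : 0 ≤ t) : t ^ 14 ≤ Real.exp (14 * t) := by
  have : Real.exp (14 * t) = Real.exp t ^ 14 := by
    rw [← Real.exp_nat_mul]; norm_num
  rw [this]
  gcongr
  exact le_exp_of t

lemma par_k {t : ℝ} (ht : 1 ≤ t) {k : ℕ} (hk : 18 * t ≤ k) : 32 / (1 / t ^ 14) ≤ 4 ^ k := by
  apply four_exp
  have h1 : Real.exp (4 + 14 * t) ≤ Real.exp k := Real.exp_le_exp.mpr (by linarith)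
  refine le_trans ?_ h1
  rw [Real.exp_add]
  have h2 : (32 : ℝ) ≤ Real.exp 4 := by
    have h3 : Real.exp 4 = Real.exp 1 ^ 4 := by rw [← Real.exp_nat_mul]; norm_num
    have := Real.exp_one_gt_d9
    rw [h3]
    calc (32 : ℝ) ≤ 2.7 ^ 4 := by norm_num
      _ ≤ _ := by gcongr; linarith
  rw [div_div_eq_mul_div, div_one]
  exact mul_le_mul h2 (t14 t (by linarith)) (by positivity) (by positivity)

lemma par_n {t : ℝ} (ht : 1 ≤ t) {n : ℕ} (hn : 155 * t ≤ n) :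
    1 < (11 / 10) ^ n * (1 / t ^ 14) := by
  have h1 : Real.exp (1 / 11) ≤ 11 / 10 := by
    have := Real.add_one_le_exp (-(1 / 11 : ℝ))
    rw [Real.exp_neg] at this
    have h2 := Real.exp_pos (1 / 11)
    have := mul_le_mul_of_nonneg_right this h2.le
    rw [inv_mul_cancel₀ h2.ne'] at this
    linarith
  have h2 : Real.exp (n * (1 / 11)) ≤ (11 / 10) ^ n := by
    rw [Real.exp_nat_mul]; gcongr
  have h3 : Real.exp (14 * t) < Real.exp (n * (1 / 11)) := Real.exp_lt_exp.mpr (by linarith)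
  rw [mul_one_div, lt_div_iff₀ (by positivity)]
  linarith [t14 t (by linarith)]

lemma par_m {t : ℝ} (ht : 1 ≤ t) {k m : ℕ} (hk1 : 1 ≤ k) (hk : k ≤ 19 * t)
    (hm : 10 ^ 8 * t ^ 3 * t ^ 14 ≤ m) :
    2 * Real.exp (-(m * (1 / t ^ 14) * (1 / (32 * k : ℝ)) ^ 2 / 4)) ≤
      (1 / t ^ 14) ^ 2 / (1200 * k) := by
  have hk' : (1 : ℝ) ≤ k := by exact_mod_cast hk1
  have hk0 : (0 : ℝ) < k := by linarith
  have ht0 : 0 < t := by linarith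
  have h1 : 55 * t ≤ m * (1 / t ^ 14) * (1 / (32 * k : ℝ)) ^ 2 / 4 := by
    have e : m * (1 / t ^ 14) * (1 / (32 * k : ℝ)) ^ 2 / 4 = m / (t ^ 14 * (4096 * k ^ 2)) := by
      field_simp; norm_num; ring
    rw [e, le_div_iff₀ (by positivity)]
    refine le_trans ?_ hm
    calc 55 * t * (t ^ 14 * (4096 * k ^ 2)) ≤ 55 * t * (t ^ 14 * (4096 * (19 * t) ^ 2)) := by gcongr
      _ = 81326080 * (t ^ 3 * t ^ 14) := by ring
      _ ≤ 10 ^ 8 * t ^ 3 * t ^ 14 := by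
          rw [mul_assoc]; gcongr; norm_num
  have h2 : Real.exp (-(m * (1 / t ^ 14) * (1 / (32 * k : ℝ)) ^ 2 / 4)) ≤ (Real.exp (55 * t))⁻¹ := by
    rw [← Real.exp_neg]
    exact Real.exp_le_exp.mpr (by linarith)
  have h3 : 2400 * k * (t ^ 14) ^ 2 ≤ Real.exp (55 * t) := by
    have e : Real.exp (55 * t) = Real.exp (8 * t) * Real.exp (19 * t) * Real.exp (14 * t) ^ 2 := by
      rw [← Real.exp_nat_mul, ← Real.exp_add, ← Real.exp_add]; congr 1; push_cast; ring
    rw [e]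
    have a1 : (2400 : ℝ) ≤ Real.exp (8 * t) := by
      have h3 : Real.exp 8 = Real.exp 1 ^ 8 := by rw [← Real.exp_nat_mul]; norm_num
      have := Real.exp_one_gt_d9
      have h4 : Real.exp 8 ≤ Real.exp (8 * t) := Real.exp_le_exp.mpr (by linarith)
      refine le_trans ?_ h4
      rw [h3]
      calc (2400 : ℝ) ≤ 2.7 ^ 8 := by norm_num
        _ ≤ _ := by gcongr; linarith
    have a2 : (k : ℝ) ≤ Real.exp (19 * t) := hk.trans (le_exp_of _)
    have a3 := t14 t ht0.le
    gcongr
  calc _ ≤ 2 * (Real.exp (55 * t))⁻¹ := by gcongr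
    _ ≤ 2 * (2400 * k * (t ^ 14) ^ 2)⁻¹ := by gcongr
    _ = _ := by field_simp; norm_num

lemma par_l {t : ℝ} (ht : 1 ≤ t) {m ℓ : ℕ} (hm : m ≤ 2 * 10 ^ 8 * t ^ 3 * t ^ 14)
    (hℓ : 10 ^ 11 * t ^ 4 * t ^ 14 ≤ ℓ) :
    5 ≤ (1 / t ^ 14 / 2) ^ m * Real.exp (ℓ / 24) := by
  have ht0 : 0 < t := by linarith
  have h1 : 2 * t ^ 14 ≤ Real.exp (15 * t) := by
    have e : Real.exp (15 * t) = Real.exp t * Real.exp (14 * t) := by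
      rw [← Real.exp_add]; congr 1; ring
    rw [e]
    have : (2 : ℝ) ≤ Real.exp t := by have := Real.add_one_le_exp t; linarith
    have := t14 t ht0.le
    gcongr
  have h2 : (2 * t ^ 14) ^ m ≤ Real.exp (m * (15 * t)) := by
    rw [Real.exp_nat_mul]; gcongr
  have h3 : (5 : ℝ) ≤ Real.exp 4 := by
    have := Real.add_one_le_exp (4 : ℝ); linarith
  have h4 : 4 + m * (15 * t) ≤ ℓ / 24 := by
    have a1 : m * (15 * t) ≤ 2 * 10 ^ 8 * t ^ 3 * t ^ 14 * (15 * t) := by gcongr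
    have a2 : 1 ≤ t ^ 4 * t ^ 14 := one_le_mul_of_one_le_of_one_le (one_le_pow₀ ht) (one_le_pow₀ ht)
    have a3 : 2 * 10 ^ 8 * t ^ 3 * t ^ 14 * (15 * t) = 3 * 10 ^ 9 * (t ^ 4 * t ^ 14) := by ring
    rw [mul_assoc] at hℓ
    linarith
  have h5 : 5 * (2 * t ^ 14) ^ m ≤ Real.exp (ℓ / 24) := by
    refine le_trans ?_ (Real.exp_le_exp.mpr h4)
    rw [Real.exp_add]
    gcongr
  have e : (1 / t ^ 14 / 2) ^ m = ((2 * t ^ 14) ^ m)⁻¹ := by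
    rw [← inv_pow]; congr 1; field_simp
  rw [e, inv_mul_eq_div, le_div_iff₀ (by positivity)]
  exact h5

lemma par_lam {t θ : ℝ} (ht : 1 ≤ t) {k ℓ D c : ℕ} (hD1 : 1 ≤ D) (hℓ1 : 1 ≤ ℓ) (hk1 : 1 ≤ k)
    (hθ : θ = 1 / (1600 * D)) (hk : k ≤ 19 * t) (hℓ : ℓ ≤ 2 * 10 ^ 11 * t ^ 4 * t ^ 14)
    (hD : D ≤ 4 * 10 ^ 13 * t ^ 5 * t ^ 14) (hc : t ≤ c) :
    1 / (1 / t ^ 14 * θ ^ 4 / (1048576 * D * ℓ * k)) ≤ 2 ^ (400 + 128 * c) := by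
  have ht0 : 0 < t := by linarith
  have hD0 : (0 : ℝ) < D := by exact_mod_cast hD1
  have hk0 : (0 : ℝ) < k := by exact_mod_cast hk1
  have hl0 : (0 : ℝ) < ℓ := by exact_mod_cast hℓ1
  have e : 1 / (1 / t ^ 14 * θ ^ 4 / (1048576 * D * ℓ * k)) =
      t ^ 14 * (1600 * D) ^ 4 * (1048576 * D * ℓ * k) := by
    rw [hθ]; field_simp
  rw [e]
  have h2 : (c : ℝ) ≤ 2 ^ c := by exact_mod_cast (Nat.lt_two_pow_self (n := c)).le
  calc t ^ 14 * (1600 * D) ^ 4 * (1048576 * D * ℓ * k) ≤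
      t ^ 14 * (1600 * (4 * 10 ^ 13 * t ^ 5 * t ^ 14)) ^ 4 * (1048576 * (4 * 10 ^ 13 * t ^ 5 * t ^ 14)
        * (2 * 10 ^ 11 * t ^ 4 * t ^ 14) * (19 * t)) := by gcongr
    _ = ((1600 * (4 * 10 ^ 13)) ^ 4 * (1048576 * (4 * 10 ^ 13) * (2 * 10 ^ 11) * 19)) * t ^ 128 := by
        ring
    _ ≤ 2 ^ 400 * (2 ^ c) ^ 128 := by
        have e2 : (2 : ℝ) ^ 400 = 2 ^ 200 * 2 ^ 200 := by rw [← pow_add]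
        have e3 : ((1600 * (4 * 10 ^ 13)) ^ 4 * (1048576 * (4 * 10 ^ 13) * (2 * 10 ^ 11) * 19) : ℝ) ≤
            2 ^ 400 := by
          rw [e2]; norm_num
        have e4 : t ^ 128 ≤ ((2 : ℝ) ^ c) ^ 128 := pow_le_pow_left₀ (by positivity) (hc.trans h2) 128
        exact mul_le_mul e3 e4 (by positivity) (by positivity)
    _ = _ := by rw [← pow_mul, pow_add, mul_comm c]

lemma final_t (hdbl : Function.Injective (fun x : G => x + x)) {t : ℝ} (ht : 1 ≤ t)
    (A : Finset G) (hA : 1 / t ^ 14 * Fintype.card G ≤ A.card) :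
    1 / t ^ 14 * (Fintype.card G : ℝ) ^ 2 ≤ TT A * (50 * Real.exp (10 ^ 20 * t ^ 21)) := by
  have ht0 : 0 < t := by linarith
  have hp : ∀ j : ℕ, 1 ≤ t ^ j := fun j => one_le_pow₀ ht
  obtain ⟨k, hka, hkb⟩ : ∃ k : ℕ, 18 * t ≤ k ∧ k ≤ 19 * t :=
    ⟨⌈18 * t⌉₊, Nat.le_ceil _, ceil_bd (by positivity) (by linarith)⟩
  obtain ⟨n, hna, hnb⟩ : ∃ n : ℕ, 155 * t ≤ n ∧ n ≤ 156 * t :=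
    ⟨⌈155 * t⌉₊, Nat.le_ceil _, ceil_bd (by positivity) (by linarith)⟩
  obtain ⟨c, hca, hcb⟩ : ∃ c : ℕ, t ≤ c ∧ c ≤ 2 * t :=
    ⟨⌈t⌉₊, Nat.le_ceil _, ceil_bd (by positivity) (by linarith)⟩
  obtain ⟨m, hma, hmb⟩ : ∃ m : ℕ, 10 ^ 8 * t ^ 3 * t ^ 14 ≤ m ∧ m ≤ 2 * 10 ^ 8 * t ^ 3 * t ^ 14 := by
    refine ⟨⌈10 ^ 8 * t ^ 3 * t ^ 14⌉₊, Nat.le_ceil _, ceil_bd (by positivity) ?_⟩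
    have := one_le_mul_of_one_le_of_one_le (hp 3) (hp 14)
    linarith
  obtain ⟨ℓ, hla, hlb⟩ : ∃ l : ℕ, 10 ^ 11 * t ^ 4 * t ^ 14 ≤ l ∧
      l ≤ 2 * 10 ^ 11 * t ^ 4 * t ^ 14 := by
    refine ⟨⌈10 ^ 11 * t ^ 4 * t ^ 14⌉₊, Nat.le_ceil _, ceil_bd (by positivity) ?_⟩
    have := one_le_mul_of_one_le_of_one_le (hp 4) (hp 14)
    linarith
  have hk1 : 1 ≤ k := by
    have : (1 : ℝ) ≤ k := by linarith
    exact_mod_cast this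
  have hn1 : 1 ≤ n := by
    have : (1 : ℝ) ≤ n := by linarith
    exact_mod_cast this
  have hm1 : 1 ≤ m := by
    have := one_le_mul_of_one_le_of_one_le (hp 3) (hp 14)
    have : (1 : ℝ) ≤ m := by linarith
    exact_mod_cast this
  have hl1 : 1 ≤ ℓ := by
    have := one_le_mul_of_one_le_of_one_le (hp 4) (hp 14)
    have : (1 : ℝ) ≤ ℓ := by linarith
    exact_mod_cast this
  have hD1 : 1 ≤ n * ℓ := Nat.mul_pos hn1 hl1
  have hDb : ((n * ℓ : ℕ) : ℝ) ≤ 4 * 10 ^ 13 * t ^ 5 * t ^ 14 := by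
    push_cast
    calc (n : ℝ) * ℓ ≤ 156 * t * (2 * 10 ^ 11 * t ^ 4 * t ^ 14) := by gcongr
      _ = 312 * 10 ^ 11 * (t ^ 5 * t ^ 14) := by ring
      _ ≤ 4 * 10 ^ 13 * t ^ 5 * t ^ 14 := by
        have h : 0 ≤ t ^ 5 * t ^ 14 := by positivity
        rw [mul_assoc (4 * 10 ^ 13 : ℝ)]; linarith
  have hD0 : (0 : ℝ) < (n * ℓ : ℕ) := by exact_mod_cast hD1
  have hk0 : (0 : ℝ) < k := by exact_mod_cast hk1
  have hl0 : (0 : ℝ) < ℓ := by exact_mod_cast hl1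
  have hlam := par_lam ht hD1 hl1 hk1 rfl hkb hlb hDb hca
  have hlam0 : 0 < 1 / t ^ 14 * (1 / (1600 * ((n * ℓ : ℕ) : ℝ))) ^ 4 /
      (1048576 * ((n * ℓ : ℕ) : ℝ) * ℓ * k) := by positivity
  have hlam1 : 1 / t ^ 14 * (1 / (1600 * ((n * ℓ : ℕ) : ℝ))) ^ 4 /
      (1048576 * ((n * ℓ : ℕ) : ℝ) * ℓ * k) ≤ 1 := by
    have a1 : (1 : ℝ) ≤ (n * ℓ : ℕ) := by exact_mod_cast hD1
    have a2 : (1 : ℝ) ≤ k := by exact_mod_cast hk1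
    have a3 : (1 : ℝ) ≤ ℓ := by exact_mod_cast hl1
    apply div_le_one_of_le₀ _ (by positivity)
    have b1 : 1 / t ^ 14 ≤ 1 := by rw [div_le_one (by positivity)]; exact hp 14
    have b2 : 1 / (1600 * ((n * ℓ : ℕ) : ℝ)) ≤ 1 := by
      rw [div_le_one (by positivity)]; linarith
    have b3 : (1 / (1600 * ((n * ℓ : ℕ) : ℝ))) ^ 4 ≤ 1 := pow_le_one₀ (by positivity) b2
    have b4 := mul_le_one₀ b1 (by positivity) b3
    have b5 := one_le_mul_of_one_le_of_one_le (one_le_mul_of_one_le_of_one_le a1 a3) a2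
    linarith
  have hmain := main_count hdbl hD1 rfl hl1 (η := 1 / t ^ 14) (by positivity) hk1 hm1
    (par_k ht hka) (par_m ht hk1 hkb hma) (par_l ht hmb hla) rfl hlam0 hlam1 le_rfl (par_n ht hna)
    hlam A hA
  clear hlam hlam0 hlam1
  have hexp : (128 : ℝ) ^ (2 * (n * ℓ * (n * (400 + 128 * c)))) * (t ^ 14) ^ 2 ≤
      Real.exp (10 ^ 20 * t ^ 21) := by
    have a1 : ((n * ℓ * (n * (400 + 128 * c)) : ℕ) : ℝ) ≤ 44 * 10 ^ 17 * t ^ 21 := by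
      have b1 : (400 + 128 * c : ℝ) ≤ 656 * t := by linarith
      calc ((n * ℓ * (n * (400 + 128 * c)) : ℕ) : ℝ) = ((n * ℓ : ℕ) : ℝ) * (n * (400 + 128 * c)) := by
            push_cast; ring
        _ ≤ 4 * 10 ^ 13 * t ^ 5 * t ^ 14 * (156 * t * (656 * t)) := by gcongr
        _ = 4 * 10 ^ 13 * 156 * 656 * t ^ 21 := by ring
        _ ≤ _ := by
          have h : 0 ≤ t ^ 21 := by positivity
          linarith
    have a2 : (128 : ℝ) ^ (2 * (n * ℓ * (n * (400 + 128 * c)))) ≤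
        Real.exp (14 * ((n * ℓ * (n * (400 + 128 * c)) : ℕ) : ℝ)) := by
      have := exp_two_ge (7 * (2 * (n * ℓ * (n * (400 + 128 * c)))))
      rw [pow_mul] at this
      norm_num only [] at this
      refine (le_trans (le_of_eq ?_) this).trans (le_of_eq ?_)
      · norm_num
      · congr 1; push_cast; ring
    have a3 : (t ^ 14) ^ 2 ≤ Real.exp (28 * t ^ 21) := by
      have : Real.exp (14 * t) ^ 2 = Real.exp (28 * t) := by
        rw [← Real.exp_nat_mul]; congr 1; push_cast; ring
      have h14 := t14 t ht0.le
      calc (t ^ 14) ^ 2 ≤ Real.exp (14 * t) ^ 2 := by gcongr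
        _ = Real.exp (28 * t) := this
        _ ≤ _ := by
          apply Real.exp_le_exp.mpr
          have : t ≤ t ^ 21 := le_self_pow₀ ht (by norm_num)
          linarith
    calc _ ≤ Real.exp (14 * ((n * ℓ * (n * (400 + 128 * c)) : ℕ) : ℝ)) * Real.exp (28 * t ^ 21) := by
          gcongr
      _ = Real.exp (14 * ((n * ℓ * (n * (400 + 128 * c)) : ℕ) : ℝ) + 28 * t ^ 21) := by
          rw [Real.exp_add]
      _ ≤ _ := by
          apply Real.exp_le_exp.mpr
          have : 1 ≤ t ^ 21 := hp 21
          linarith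
  have e1 : 1 / t ^ 14 * (Fintype.card G : ℝ) ^ 2 =
      ((1 / t ^ 14) ^ 3 / 50 * ((Fintype.card G : ℝ) ^ 2)) * (50 * (t ^ 14) ^ 2) := by
    field_simp
  rw [e1]
  calc _ ≤ TT A * (128 : ℝ) ^ (2 * (n * ℓ * (n * (400 + 128 * c)))) * (50 * (t ^ 14) ^ 2) := by gcongr
    _ = TT A * (50 * ((128 : ℝ) ^ (2 * (n * ℓ * (n * (400 + 128 * c)))) * (t ^ 14) ^ 2)) := by ring
    _ ≤ _ := by gcongr

end VC


namespace VC

open Finset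

lemma count_ge_TT {N : ℕ} [NeZero N] (A : Finset (ZMod N)) :
    TT A ≤ (Finset.univ.filter fun t : ZMod N × ZMod N × ZMod N =>
      t.1 ∈ A ∧ t.2.1 ∈ A ∧ t.2.2 ∈ A ∧ t.1 + t.2.2 = 2 * t.2.1).card := by
  unfold TT
  apply Finset.card_le_card_of_injOn (fun p => (p.1, p.2, p.2 + p.2 - p.1))
  · intro p hp
    simp only [Finset.coe_filter, Finset.mem_product, Set.mem_setOf_eq, Finset.mem_univ,
      true_and] at hp ⊢
    refine ⟨hp.1.1, hp.1.2, hp.2, ?_⟩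
    ring
  · intro p _ q _ h
    simp only [Prod.mk.injEq] at h
    exact Prod.ext h.1 h.2.1

lemma count_ge_card {N : ℕ} [NeZero N] (A : Finset (ZMod N)) :
    A.card ≤ (Finset.univ.filter fun t : ZMod N × ZMod N × ZMod N =>
      t.1 ∈ A ∧ t.2.1 ∈ A ∧ t.2.2 ∈ A ∧ t.1 + t.2.2 = 2 * t.2.1).card := by
  apply Finset.card_le_card_of_injOn (fun p => (p, p, p))
  · intro p hp
    simp only [Finset.coe_filter, Set.mem_setOf_eq, Finset.mem_univ, true_and, Finset.mem_coe] at hp ⊢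
    refine ⟨hp, hp, hp, ?_⟩
    ring
  · intro p _ q _ h
    simp only [Prod.mk.injEq] at h
    exact h.1

lemma dbl_inj {N : ℕ} (hN : N.Prime) (h2 : N ≠ 2) :
    Function.Injective (fun x : ZMod N => x + x) := by
  haveI := Fact.mk hN
  intro x y h
  have h' : (2 : ZMod N) * x = 2 * y := by simpa [two_mul] using h
  have h0 : (2 : ZMod N) ≠ 0 := by
    intro h3
    have h4 : ((2 : ℕ) : ZMod N) = 0 := by exact_mod_cast h3
    rw [ZMod.natCast_eq_zero_iff] at h4
    exact h2 ((Nat.prime_dvd_prime_iff_eq hN Nat.prime_two).mp h4)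
  exact mul_left_cancel₀ h0 h'

lemma final_eta {N : ℕ} [NeZero N] (hN : N.Prime) (h2 : N ≠ 2) {η : ℝ} (h0 : 0 < η) (h1 : η ≤ 1)
    (A : Finset (ZMod N)) (hA : η * N ≤ A.card) :
    η * (N : ℝ) ^ 2 ≤ TT A * (50 * Real.exp (10 ^ 20 * η ^ (-(3 : ℝ) / 2))) := by
  have ht : 1 ≤ η ^ (-(1 : ℝ) / 14) :=
    Real.one_le_rpow_of_pos_of_le_one_of_nonpos h0 h1 (by norm_num)
  have e1 : 1 / (η ^ (-(1 : ℝ) / 14)) ^ 14 = η := by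
    rw [← Real.rpow_natCast, ← Real.rpow_mul h0.le]
    norm_num
    rw [Real.rpow_neg_one, inv_inv]
  have e2 : (η ^ (-(1 : ℝ) / 14)) ^ 21 = η ^ (-(3 : ℝ) / 2) := by
    rw [← Real.rpow_natCast, ← Real.rpow_mul h0.le]
    norm_num
  have := final_t (dbl_inj hN h2) ht A (by rw [e1, ZMod.card]; exact hA)
  rw [e1, e2, ZMod.card] at this
  exact this

end VC

theorem varnavides_count :
    ∃ c₀ c₁ : ℝ, 0 < c₀ ∧ 0 < c₁ ∧
      ∀ (N' : ℕ) [NeZero N'], Nat.Prime N' →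
        ∀ η : ℝ, 0 < η →
          ∀ A' : Finset (ZMod N'), (A'.card : ℝ) ≥ η * N' →
            ((Finset.univ.filter fun t : ZMod N' × ZMod N' × ZMod N' =>
                t.1 ∈ A' ∧ t.2.1 ∈ A' ∧ t.2.2 ∈ A' ∧ t.1 + t.2.2 = 2 * t.2.1).card : ℝ) ≥
              η * (N' : ℝ) ^ 2 /
                (c₀ * Real.exp (c₁ * η ^ (-(3 : ℝ) / 2) * (Real.log (1 / η)) ^ 3)) := by
  obtain ⟨K, hK⟩ : ∃ K : ℝ, K = Real.exp (10 ^ 20 * (1 / 2 : ℝ) ^ (-(3 : ℝ) / 2)) := ⟨_, rfl⟩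
  obtain ⟨c₁, hc₁⟩ : ∃ c₁ : ℝ, c₁ = 4 * 10 ^ 20 := ⟨_, rfl⟩
  have hK1 : 1 ≤ K := by rw [hK]; exact Real.one_le_exp (by positivity)
  refine ⟨100 * K, c₁, by positivity, by rw [hc₁]; positivity, ?_⟩
  intro N' _ hN η h0 A' hA
  have hNpos : (0 : ℝ) < N' := by exact_mod_cast hN.pos
  have hη1 : η ≤ 1 := by
    have h1 : A'.card ≤ N' := by
      have := Finset.card_le_univ A'
      rwa [ZMod.card] at this
    have h2 : (A'.card : ℝ) ≤ N' := by exact_mod_cast h1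
    by_contra h
    push Not at h
    have := mul_lt_mul_of_pos_right h hNpos
    linarith
  have hlog : 0 ≤ Real.log (1 / η) := Real.log_nonneg (by rw [le_div_iff₀ h0]; linarith)
  have hr : 0 < η ^ (-(3 : ℝ) / 2) := Real.rpow_pos_of_pos h0 _
  have hE : 0 ≤ c₁ * η ^ (-(3 : ℝ) / 2) * (Real.log (1 / η)) ^ 3 := by
    rw [hc₁]; positivity
  have hexp : 1 ≤ Real.exp (c₁ * η ^ (-(3 : ℝ) / 2) * (Real.log (1 / η)) ^ 3) :=
    Real.one_le_exp hE
  have hc1 : (A'.card : ℝ) ≤ _ := Nat.cast_le.mpr (VC.count_ge_card A')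
  have hc2 : (VC.TT A' : ℝ) ≤ _ := Nat.cast_le.mpr (VC.count_ge_TT A')
  generalize hX : ((Finset.univ.filter fun t : ZMod N' × ZMod N' × ZMod N' =>
      t.1 ∈ A' ∧ t.2.1 ∈ A' ∧ t.2.2 ∈ A' ∧ t.1 + t.2.2 = 2 * t.2.1).card : ℝ) = X at *
  rw [ge_iff_le, div_le_iff₀ (by positivity)]
  have hX0 : 0 ≤ X := le_trans (Nat.cast_nonneg _) hc2
  by_cases h2 : N' = 2
  · have h3 : (N' : ℝ) = 2 := by exact_mod_cast h2
    rw [h3] at hA ⊢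
    have h4 : 100 ≤ 100 * K * Real.exp (c₁ * η ^ (-(3 : ℝ) / 2) * (Real.log (1 / η)) ^ 3) := by
      have := one_le_mul_of_one_le_of_one_le hK1 hexp
      linarith
    have h5 := mul_le_mul_of_nonneg_left h4 hX0
    linarith
  by_cases hh : η ≤ 1 / 2
  · have h3 := VC.final_eta hN h2 h0 hη1 A' hA
    have hl2 : (0.69 : ℝ) ≤ Real.log (1 / η) := by
      have h4 : Real.log 2 ≤ Real.log (1 / η) :=
        Real.log_le_log (by norm_num) (by rw [le_div_iff₀ h0]; linarith)
      linarith [Real.log_two_gt_d9]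
    have h5 : (0.69 : ℝ) ^ 3 ≤ Real.log (1 / η) ^ 3 := pow_le_pow_left₀ (by norm_num) hl2 3
    have h6 : 1 ≤ 4 * Real.log (1 / η) ^ 3 := by norm_num at h5 ⊢; linarith
    have h7 : 10 ^ 20 * η ^ (-(3 : ℝ) / 2) ≤
        c₁ * η ^ (-(3 : ℝ) / 2) * (Real.log (1 / η)) ^ 3 := by
      have h8 : 0 ≤ 10 ^ 20 * η ^ (-(3 : ℝ) / 2) := by positivity
      have h9 := mul_le_mul_of_nonneg_left h6 h8
      rw [hc₁]
      calc 10 ^ 20 * η ^ (-(3 : ℝ) / 2) = 10 ^ 20 * η ^ (-(3 : ℝ) / 2) * 1 := by ring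
        _ ≤ _ := h9
        _ = _ := by ring
    refine h3.trans ?_
    apply mul_le_mul hc2 _ (by positivity) hX0
    apply mul_le_mul _ (Real.exp_le_exp.mpr h7) (by positivity) (by positivity)
    linarith
  · push Not at hh
    have h3 := VC.final_eta hN h2 (η := 1 / 2) (by norm_num) (by norm_num) A' (by
      refine le_trans ?_ hA
      gcongr)
    rw [← hK] at h3
    have h4 : η * (N' : ℝ) ^ 2 ≤ 1 * (N' : ℝ) ^ 2 := by gcongr
    have h5 : (VC.TT A' : ℝ) * K ≤ X * K := by gcongr
    have h6 := mul_le_mul_of_nonneg_left hexp (by positivity : 0 ≤ X * K)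
    linarith
end

section
/- Let N' be a prime, let η ∈ (0, 1], and let L be an integer with 3 ≤ L ≤ N'. Suppose that every subset of {1, 2, …, L} with at least (η/2)·L elements contains a nontrivial three-term arithmetic progression of integers. Then every set A' ⊆ ℤ/N'ℤ with |A'| ≥ ηN' contains at least (η/2)·N'(N'−1)/(L(L−1)) nontrivial three-term arithmetic progressions, i.e., there are at least that many pairs (a, d) ∈ ℤ/N'ℤ × (ℤ/N'ℤ \ {0}) with a, a+d, a+2d all in A'. -/
/-- **From Roth's theorem in `{1,…,L}` to many progressions in `ℤ/N'ℤ`.**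
Let `N'` be prime, `η ∈ (0,1]`, and `3 ≤ L ≤ N'`. If every subset of `{1,…,L}` with
at least `(η/2)L` elements contains a nontrivial three-term arithmetic progression
of integers, then every `A' ⊆ ℤ/N'ℤ` with `|A'| ≥ ηN'` contains at least
`(η/2)·N'(N'−1)/(L(L−1))` nontrivial three-term progressions, counted as pairs
`(a, d)` with `d ≠ 0` and `a, a+d, a+2d ∈ A'`. -/
theorem varnavides_step (N' : ℕ) [NeZero N'] (hN' : Nat.Prime N')
    (η : ℝ) (hη0 : 0 < η) (hη1 : η ≤ 1)
    (L : ℕ) (hL3 : 3 ≤ L) (hLN : L ≤ N')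
    (hRoth : ∀ T : Finset ℕ, T ⊆ Finset.Icc 1 L → (T.card : ℝ) ≥ η / 2 * L →
      ∃ x ∈ T, ∃ y ∈ T, ∃ w ∈ T, x + w = 2 * y ∧ x ≠ y)
    (A' : Finset (ZMod N')) (hA' : (A'.card : ℝ) ≥ η * N') :
    ((Finset.univ.filter fun q : ZMod N' × ZMod N' =>
        q.2 ≠ 0 ∧ q.1 ∈ A' ∧ q.1 + q.2 ∈ A' ∧ q.1 + 2 * q.2 ∈ A').card : ℝ) ≥
      η / 2 * ((N' : ℝ) * ((N' : ℝ) - 1)) / ((L : ℝ) * ((L : ℝ) - 1)) := by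
  classical
  have : Fact N'.Prime := ⟨hN'⟩
  set S := (Finset.univ.filter fun q : ZMod N' × ZMod N' =>
        q.2 ≠ 0 ∧ q.1 ∈ A' ∧ q.1 + q.2 ∈ A' ∧ q.1 + 2 * q.2 ∈ A') with hS
  let T : ZMod N' → ZMod N' → Finset ℕ := fun e b =>
    (Finset.Icc 1 L).filter fun i => b + (i : ZMod N') * e ∈ A'
  let g : ZMod N' → Finset (ZMod N') := fun e =>
    Finset.univ.filter fun b => ((T e b).card : ℝ) ≥ η / 2 * L
  have hLpos : (3 : ℝ) ≤ L := by exact_mod_cast hL3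
  have hNL : (L : ℝ) ≤ N' := by exact_mod_cast hLN
  have hsum : ∀ e, ∑ b, ((T e b).card : ℝ) = L * A'.card := by
    intro e
    have h1 : ∀ b, (T e b).card = ∑ i ∈ Finset.Icc 1 L, if b + (i : ZMod N') * e ∈ A' then 1 else 0 := by
      intro b
      exact Finset.card_filter _ _
    have h2 : ∑ b, (T e b).card = L * A'.card := by
      simp_rw [h1]
      rw [Finset.sum_comm]
      have h3 : ∀ i ∈ Finset.Icc 1 L, (∑ b : ZMod N', if b + (i : ZMod N') * e ∈ A' then 1 else 0) = A'.card := by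
        intro i _
        refine (Equiv.sum_comp (Equiv.addRight ((i : ZMod N') * e))
          (fun b => if b ∈ A' then (1 : ℕ) else 0)).trans ?_
        simp
      rw [Finset.sum_congr rfl h3]
      simp
    exact_mod_cast h2
  have hg : ∀ e, η / 2 * N' ≤ ((g e).card : ℝ) := by
    intro e
    have h1 : ∑ b, ((T e b).card : ℝ) ≤
        ∑ b : ZMod N', (η / 2 * L + L * (if ((T e b).card : ℝ) ≥ η / 2 * L then 1 else 0)) := by
      apply Finset.sum_le_sum
      intro b _
      have h2 : ((T e b).card : ℝ) ≤ L := by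
        have : (T e b).card ≤ (Finset.Icc 1 L).card := Finset.card_filter_le _ _
        simp at this
        exact_mod_cast this
      split_ifs with h
      · nlinarith
      · linarith
    rw [hsum, Finset.sum_add_distrib, Finset.sum_const, ← Finset.mul_sum, Finset.sum_boole] at h1
    simp only [Finset.card_univ, ZMod.card, nsmul_eq_mul] at h1
    change _ ≤ _ + (L : ℝ) * ((g e).card : ℝ) at h1
    have h4 : (L : ℝ) * (η * N') ≤ L * A'.card := by gcongr
    have h5 : (L : ℝ) * (η / 2 * N') ≤ L * ((g e).card : ℝ) := by linarith
    exact le_of_mul_le_mul_left h5 (by linarith)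
  let G : Finset (Σ _ : ZMod N', ZMod N') := (Finset.univ.erase 0).sigma g
  have hG : η / 2 * ((N' : ℝ) * ((N' : ℝ) - 1)) ≤ (G.card : ℝ) := by
    rw [Finset.card_sigma]
    push_cast
    have : ∑ e ∈ (Finset.univ : Finset (ZMod N')).erase 0, η / 2 * (N' : ℝ) ≤
      ∑ e ∈ (Finset.univ : Finset (ZMod N')).erase 0, ((g e).card : ℝ) :=
      Finset.sum_le_sum fun e _ => hg e
    rw [Finset.sum_const, Finset.card_erase_of_mem (Finset.mem_univ _), Finset.card_univ,
      ZMod.card, nsmul_eq_mul, Nat.cast_sub hN'.one_le] at this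
    push_cast at this
    linarith
  let φ : (ZMod N' × ZMod N') × (ℕ × ℕ) → (Σ _ : ZMod N', ZMod N') := fun p =>
    ⟨p.1.2 / ((p.2.2 : ZMod N') - (p.2.1 : ZMod N')),
      p.1.1 - p.2.1 * (p.1.2 / ((p.2.2 : ZMod N') - (p.2.1 : ZMod N')))⟩
  have hsub : G ⊆ (S ×ˢ (Finset.Icc 1 L).offDiag).image φ := by
    rintro ⟨e, b⟩ hm
    simp only [G, g, Finset.mem_sigma, Finset.mem_erase, Finset.mem_univ, and_true,
      Finset.mem_filter, true_and] at hm
    obtain ⟨he, hb⟩ := hm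
    obtain ⟨x, hx, y, hy, w, hw, hxy, hne⟩ := hRoth (T e b) (Finset.filter_subset _ _) hb
    simp only [T, Finset.mem_filter] at hx hy hw
    have hd : (y : ZMod N') - (x : ZMod N') ≠ 0 := by
      intro h
      have h1 : ((y : ℕ) : ZMod N') = (x : ℕ) := sub_eq_zero.mp h
      rw [ZMod.natCast_eq_natCast_iff] at h1
      have hx1 := Finset.mem_Icc.mp hx.1
      have hy1 := Finset.mem_Icc.mp hy.1
      have h2 := (Nat.modEq_iff_dvd.mp h1)
      have h3 : (x : ℤ) - y = 0 := Int.eq_zero_of_abs_lt_dvd h2 (by rw [abs_lt]; omega)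
      omega
    have hw' : (x : ZMod N') + w = 2 * y := by exact_mod_cast congrArg (Nat.cast (R := ZMod N')) hxy
    rw [Finset.mem_image]
    refine ⟨((b + x * e, ((y : ZMod N') - x) * e), (x, y)), ?_, ?_⟩
    · simp only [Finset.mem_product, Finset.mem_offDiag, hS, Finset.mem_filter, Finset.mem_univ,
        true_and]
      refine ⟨⟨mul_ne_zero hd he, hx.2, ?_, ?_⟩, hx.1, hy.1, hne⟩
      · convert hy.2 using 1
        ring
      · convert hw.2 using 1
        linear_combination (-e) * hw'
    · have h5 : ((y : ZMod N') - x) * e / ((y : ZMod N') - x) = e := by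
        field_simp
      simp only [φ, h5]
      congr 1
      ring
  have hcard : G.card ≤ S.card * (L * L - L) := by
    refine (Finset.card_le_card hsub).trans (Finset.card_image_le.trans ?_)
    rw [Finset.card_product, Finset.offDiag_card]
    simp
  have hcard' : (G.card : ℝ) ≤ S.card * ((L : ℝ) * L - L) := by
    have := (Nat.cast_le (α := ℝ)).mpr hcard
    rw [Nat.cast_mul, Nat.cast_sub (Nat.le_mul_self L)] at this
    exact_mod_cast this
  rw [ge_iff_le, div_le_iff₀ (by nlinarith)]
  linarith
end

section
/- Let N' be an odd positive integer, let a, σ: ℤ/N'ℤ → ℝ≥0 with ∑_n σ(n) = 1, and set a₁ = a ∗ σ (convolution on ℤ/N'ℤ). Let δ, ε > 0, let C > 0, and let K ≥ 1 be such that ∑_m |â(m)|^{5/2} ≤ K, ∑_m |â(m)|^{10/3} ≤ K, and ∑_m |â(m)|^{5/3} ≤ K. Suppose that |1 − σ̂(−2x)·σ̂(x)²| ≤ C·ε for every x ∈ ℤ/N'ℤ with |â(x)| ≥ δ. Then |∑_m â(−2m)(â(m))² − ∑_m â₁(−2m)(â₁(m))²| ≤ K·(C·ε + 2δ). -/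
/-- The Fourier transform on `ℤ/Nℤ`: `f̂(b) = ∑_{n} f(n) e(−nb/N)` with `e(x) = e^{2πix}`. -/
noncomputable def dft {N : ℕ} [NeZero N] (f : ZMod N → ℂ) (b : ZMod N) : ℂ :=
    ∑ n : ZMod N, f n * Complex.exp (-(2 * Real.pi * Complex.I * (n.val : ℂ) * (b.val : ℂ) / N))


lemma dft_eq_char {N : ℕ} [NeZero N] (f : ZMod N → ℂ) (b : ZMod N) :
    dft f b = ∑ n : ZMod N, f n * ZMod.stdAddChar (-(n * b)) := by
  unfold dft
  refine Finset.sum_congr rfl fun n _ => ?_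
  have h : -(n * b) = ((-((n.val : ℤ) * (b.val : ℤ)) : ℤ) : ZMod N) := by
    push_cast
    rw [ZMod.natCast_zmod_val, ZMod.natCast_zmod_val]
  rw [h, ZMod.stdAddChar_coe]
  congr 2
  push_cast
  ring

lemma dft_conv {N : ℕ} [NeZero N] (f g : ZMod N → ℝ) (b : ZMod N) :
    dft (fun n => ((∑ m : ZMod N, f m * g (n - m) : ℝ) : ℂ)) b
      = dft (fun n => (f n : ℂ)) b * dft (fun n => (g n : ℂ)) b := by
  simp only [dft_eq_char, Complex.ofReal_sum, Complex.ofReal_mul]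
  simp_rw [Finset.sum_mul]
  rw [Finset.sum_comm]
  refine Finset.sum_congr rfl fun m _ => ?_
  rw [Finset.mul_sum, ← Equiv.sum_comp (Equiv.addRight m)]
  refine Finset.sum_congr rfl fun n _ => ?_
  have h : -((n + m) * b) = -(m * b) + -(n * b) := by ring
  simp only [Equiv.coe_addRight, add_sub_cancel_right]
  rw [h, AddChar.map_add_eq_mul]
  ring

lemma dft_norm_le {N : ℕ} [NeZero N] (g : ZMod N → ℝ) (hg : ∀ n, 0 ≤ g n)
    (h1 : ∑ n : ZMod N, g n = 1) (b : ZMod N) : ‖dft (fun n => (g n : ℂ)) b‖ ≤ 1 := by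
  rw [dft_eq_char, ← h1]
  refine (norm_sum_le _ _).trans (Finset.sum_le_sum fun n _ => ?_)
  rw [norm_mul, AddChar.norm_apply, mul_one, Complex.norm_real, Real.norm_of_nonneg (hg n)]

lemma sum_neg_two {N : ℕ} [NeZero N] (hodd : Odd N) (F : ZMod N → ℝ) :
    ∑ m : ZMod N, F (-(2 * m)) = ∑ m : ZMod N, F m := by
  have hu : IsUnit (2 : ZMod N) := by
    have := (ZMod.isUnit_iff_coprime 2 N).2 (Nat.coprime_two_left.2 hodd)
    simpa using this
  have hinj : Function.Injective (fun m : ZMod N => -(2 * m)) := by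
    intro x y h
    exact hu.mul_left_cancel (neg_injective h)
  exact Function.Bijective.sum_comp (Finite.injective_iff_bijective.1 hinj) F

lemma young_aux {x y : ℝ} (hx : 0 ≤ x) (hy : 0 ≤ y) :
    x * y ≤ 2 / 5 * x ^ ((5 : ℝ) / 2) + 3 / 5 * y ^ ((5 : ℝ) / 3) := by
  have h : Real.HolderConjugate (5 / 2) (5 / 3) := by
    rw [Real.holderConjugate_iff]; norm_num
  have := Real.young_inequality_of_nonneg hx hy h
  linarith

/-- **The smoothed function counts progressions like the original (bound on `Δ`).**
With `a₁ = a ∗ σ`, `∑σ = 1`, moment bounds `∑|â|^{5/2}, ∑|â|^{10/3}, ∑|â|^{5/3} ≤ K`,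
and `|1 − σ̂(−2x)σ̂(x)²| ≤ Cε` whenever `|â(x)| ≥ δ`, one has
`|∑_m â(−2m)â(m)² − ∑_m â₁(−2m)â₁(m)²| ≤ K(Cε + 2δ)`. -/
theorem smoothing_ap_count_close (N' : ℕ) [NeZero N'] (hodd : Odd N')
    (a σ : ZMod N' → ℝ) (ha : ∀ n, 0 ≤ a n) (hσ : ∀ n, 0 ≤ σ n)
    (hσ1 : ∑ n : ZMod N', σ n = 1)
    (a₁ : ZMod N' → ℝ) (ha₁ : a₁ = fun n => ∑ m : ZMod N', a m * σ (n - m))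
    (δ ε C K : ℝ) (hδ : 0 < δ) (hε : 0 < ε) (hC : 0 < C) (hK : 1 ≤ K)
    (h52 : ∑ m : ZMod N', ‖dft (fun n => (a n : ℂ)) m‖ ^ ((5 : ℝ) / 2) ≤ K)
    (h103 : ∑ m : ZMod N', ‖dft (fun n => (a n : ℂ)) m‖ ^ ((10 : ℝ) / 3) ≤ K)
    (h53 : ∑ m : ZMod N', ‖dft (fun n => (a n : ℂ)) m‖ ^ ((5 : ℝ) / 3) ≤ K)
    (hsig : ∀ x : ZMod N', δ ≤ ‖dft (fun n => (a n : ℂ)) x‖ →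
      ‖1 - dft (fun n => (σ n : ℂ)) (-(2 * x)) * (dft (fun n => (σ n : ℂ)) x) ^ 2‖ ≤ C * ε) :
    ‖(∑ m : ZMod N', dft (fun n => (a n : ℂ)) (-(2 * m)) * (dft (fun n => (a n : ℂ)) m) ^ 2) -
        ∑ m : ZMod N', dft (fun n => (a₁ n : ℂ)) (-(2 * m)) *
          (dft (fun n => (a₁ n : ℂ)) m) ^ 2‖ ≤
      K * (C * ε + 2 * δ) := by
  set A := dft (fun n => (a n : ℂ)) with hA
  set S := dft (fun n => (σ n : ℂ)) with hS
  have hconv : ∀ b, dft (fun n => (a₁ n : ℂ)) b = A b * S b := by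
    intro b; rw [ha₁]; exact dft_conv a σ b
  have hS1 : ∀ b, ‖S b‖ ≤ 1 := dft_norm_le σ hσ hσ1
  simp_rw [hconv]
  rw [← Finset.sum_sub_distrib]
  have e52 := sum_neg_two hodd (fun m => ‖A m‖ ^ ((5 : ℝ) / 2))
  have hX : ∑ m : ZMod N', ‖A (-(2 * m))‖ * ‖A m‖ ^ 2 ≤ K := by
    have : ∀ m : ZMod N', ‖A (-(2 * m))‖ * ‖A m‖ ^ 2 ≤
        2 / 5 * ‖A (-(2 * m))‖ ^ ((5 : ℝ) / 2) + 3 / 5 * ‖A m‖ ^ ((10 : ℝ) / 3) := by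
      intro m
      have h := young_aux (norm_nonneg (A (-(2 * m)))) (sq_nonneg ‖A m‖)
      rw [← Real.rpow_natCast_mul (norm_nonneg _)] at h
      norm_num at h ⊢
      exact h
    refine (Finset.sum_le_sum fun m _ => this m).trans ?_
    rw [Finset.sum_add_distrib, ← Finset.mul_sum, ← Finset.mul_sum, e52]
    linarith
  have hY : ∑ m : ZMod N', ‖A (-(2 * m))‖ * ‖A m‖ ≤ K := by
    refine (Finset.sum_le_sum fun m _ =>
      young_aux (norm_nonneg (A (-(2 * m)))) (norm_nonneg (A m))).trans ?_
    rw [Finset.sum_add_distrib, ← Finset.mul_sum, ← Finset.mul_sum, e52]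
    linarith
  have hterm : ∀ m : ZMod N', ‖A (-(2 * m)) * A m ^ 2 -
      A (-(2 * m)) * S (-(2 * m)) * (A m * S m) ^ 2‖ ≤
      C * ε * (‖A (-(2 * m))‖ * ‖A m‖ ^ 2) + 2 * δ * (‖A (-(2 * m))‖ * ‖A m‖) := by
    intro m
    have e : A (-(2 * m)) * A m ^ 2 - A (-(2 * m)) * S (-(2 * m)) * (A m * S m) ^ 2 =
      A (-(2 * m)) * A m ^ 2 * (1 - S (-(2 * m)) * S m ^ 2) := by ring
    rw [e, norm_mul, norm_mul, norm_pow]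
    have p := norm_nonneg (A (-(2 * m)))
    have q := norm_nonneg (A m)
    have hce : 0 < C * ε := mul_pos hC hε
    rcases le_or_gt δ ‖A m‖ with h | h
    · have h2 := mul_le_mul_of_nonneg_left (hsig m h) (by positivity : 0 ≤ ‖A (-(2 * m))‖ * ‖A m‖ ^ 2)
      have : 0 ≤ 2 * δ * (‖A (-(2 * m))‖ * ‖A m‖) := by positivity
      linarith
    · have hb : ‖1 - S (-(2 * m)) * S m ^ 2‖ ≤ 2 := by
        refine (norm_sub_le _ _).trans ?_
        rw [norm_one, norm_mul, norm_pow]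
        have := mul_le_one₀ (hS1 (-(2 * m))) (by positivity) (pow_le_one₀ (n := 2) (norm_nonneg _) (hS1 m))
        linarith
      have h2 := mul_le_mul_of_nonneg_left hb (by positivity : 0 ≤ ‖A (-(2 * m))‖ * ‖A m‖ ^ 2)
      have h3 := mul_le_mul_of_nonneg_left h.le (by positivity : 0 ≤ ‖A (-(2 * m))‖ * ‖A m‖)
      have : 0 ≤ C * ε * (‖A (-(2 * m))‖ * ‖A m‖ ^ 2) := by positivity
      nlinarith
  refine (norm_sum_le _ _).trans ((Finset.sum_le_sum fun m _ => hterm m).trans ?_)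
  rw [Finset.sum_add_distrib, ← Finset.mul_sum, ← Finset.mul_sum]
  have h1 := mul_le_mul_of_nonneg_left hX (mul_pos hC hε).le
  have h2 := mul_le_mul_of_nonneg_left hY (by positivity : 0 ≤ 2 * δ)
  linarith
end

section
/- Let N' be an odd positive integer and let π: ℤ → ℤ/N'ℤ be the reduction map. For f: ℤ/N'ℤ → ℂ, define its lift f̃: ℤ → ℂ by f̃(n) = f(n mod N') for n ∈ [−(N'−1)/2, (N'−1)/2] and f̃(n) = 0 otherwise. Suppose f is supported on π([1, (N'−1)/2]) and g is supported on π([−⌊N'/4⌋, ⌊N'/4⌋]). Then ∑_{n ∈ ℤ/N'ℤ} |(f ∗ g)(n)|² = ∑_{n ∈ ℤ} |(f̃ ∗ g̃)(n)|², where f ∗ g is the cyclic convolution on ℤ/N'ℤ and f̃ ∗ g̃ is the convolution on ℤ. -/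
open scoped Classical

theorem aux_tri (N : ℕ) (a b : ℤ) (h : (a : ZMod N) = (b : ZMod N)) :
    a = b ∨ b + N ≤ a ∨ a ≤ b - N := by
  obtain ⟨j, hj⟩ := (ZMod.intCast_eq_intCast_iff_dvd_sub a b N).1 h
  rcases lt_trichotomy j 0 with hj0 | hj0 | hj0
  · right; left
    have : (0 : ℤ) ≤ N := by positivity
    nlinarith
  · left
    subst hj0
    linarith
  · right; right
    have : (0 : ℤ) ≤ N := by positivity
    nlinarith

theorem aux_sum {β : Type*} [AddCommMonoid β] (N : ℕ) [NeZero N] (h : ZMod N → β) (a : ℤ) :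
    ∑ x : ZMod N, h x = ∑ n ∈ Finset.Ico a (a + N), h (n : ZMod N) := by
  have hN : (0 : ℤ) < N := by exact_mod_cast Nat.pos_of_ne_zero (NeZero.ne N)
  symm
  refine Finset.sum_bij (fun n _ => (n : ZMod N)) (fun _ _ => Finset.mem_univ _) ?_ ?_
    (fun _ _ => rfl)
  · intro x hx y hy hxy
    rw [Finset.mem_Ico] at hx hy
    have := aux_tri N x y hxy
    omega
  · intro x _
    refine ⟨a + ((x.val : ℤ) - a) % N, ?_, ?_⟩
    · rw [Finset.mem_Ico]
      have h1 := Int.emod_nonneg ((x.val : ℤ) - a) hN.ne'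
      have h2 := Int.emod_lt_of_pos ((x.val : ℤ) - a) hN
      omega
    · have h1 : a + ((x.val : ℤ) - a) % N = x.val - N * (((x.val : ℤ) - a) / N) := by
        have := Int.emod_add_mul_ediv ((x.val : ℤ) - a) N
        linarith
      rw [h1]
      simp

/-- **Cyclic and integer convolutions agree in `ℓ²` for suitably supported functions.**
Let `N'` be odd, `f` supported on `π([1,(N'−1)/2])`, `g` supported on
`π([−⌊N'/4⌋, ⌊N'/4⌋])`, and let `f̃, g̃` be the lifts to `ℤ` supported on
`[−(N'−1)/2, (N'−1)/2]`. Then `∑_{n ∈ ℤ/N'ℤ} |(f∗g)(n)|² = ∑_{n ∈ ℤ} |(f̃∗g̃)(n)|²`. -/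
theorem cyclic_convolution_l2_lift (N' : ℕ) [NeZero N'] (hodd : Odd N')
    (f g : ZMod N' → ℂ)
    (hf : ∀ n : ZMod N', f n ≠ 0 →
      ∃ m : ℤ, 1 ≤ m ∧ m ≤ ((N' : ℤ) - 1) / 2 ∧ (m : ZMod N') = n)
    (hg : ∀ n : ZMod N', g n ≠ 0 →
      ∃ m : ℤ, -((N' : ℤ) / 4) ≤ m ∧ m ≤ (N' : ℤ) / 4 ∧ (m : ZMod N') = n)
    (ftilde gtilde : ℤ → ℂ)
    (hft : ftilde = fun n : ℤ =>
      if -(((N' : ℤ) - 1) / 2) ≤ n ∧ n ≤ ((N' : ℤ) - 1) / 2 then f (n : ZMod N') else 0)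
    (hgt : gtilde = fun n : ℤ =>
      if -(((N' : ℤ) - 1) / 2) ≤ n ∧ n ≤ ((N' : ℤ) - 1) / 2 then g (n : ZMod N') else 0) :
    ∑ n : ZMod N', ‖∑ m : ZMod N', f m * g (n - m)‖ ^ 2 =
      ∑' n : ℤ, ‖∑' m : ℤ, ftilde m * gtilde (n - m)‖ ^ 2 := by
  obtain ⟨k, hk⟩ := hodd
  have hf1 : ∀ m : ℤ, ftilde m ≠ 0 → 1 ≤ m ∧ m ≤ k := by
    intro m hm
    rw [hft] at hm
    simp only [ne_eq, ite_eq_right_iff, Classical.not_imp] at hm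
    obtain ⟨t, ht1, ht2, ht⟩ := hf _ hm.2
    have := aux_tri N' _ _ ht
    omega
  have hg1 : ∀ m : ℤ, gtilde m ≠ 0 → -((N' : ℤ) / 4) ≤ m ∧ m ≤ (N' : ℤ) / 4 := by
    intro m hm
    rw [hgt] at hm
    simp only [ne_eq, ite_eq_right_iff, Classical.not_imp] at hm
    obtain ⟨t, ht1, ht2, ht⟩ := hg _ hm.2
    have := aux_tri N' _ _ ht
    omega
  rw [aux_sum N' _ (1 - (N' : ℤ) / 4), tsum_eq_sum (s := Finset.Ico (1 - (N' : ℤ) / 4) (1 - (N' : ℤ) / 4 + N'))]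
  · refine Finset.sum_congr rfl fun n hn => ?_
    rw [Finset.mem_Ico] at hn
    congr 2
    rw [aux_sum N' _ (-(k : ℤ)), tsum_eq_sum (s := Finset.Ico (-(k : ℤ)) (-(k : ℤ) + N'))]
    · refine Finset.sum_congr rfl fun m hm => ?_
      rw [Finset.mem_Ico] at hm
      have e : ftilde m = f (m : ZMod N') := by
        rw [hft]
        exact if_pos (by omega)
      rw [e]
      by_cases h0 : f (m : ZMod N') = 0
      · simp [h0]
      have hm1 := hf1 m (by rwa [e])
      congr 1
      rw [hgt]
      simp only
      split_ifs with hc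
      · push_cast
        rfl
      · by_contra h1
        obtain ⟨t, ht1, ht2, ht⟩ := hg _ h1
        have := aux_tri N' t (n - m) (by rw [ht]; push_cast; rfl)
        omega
    · intro m hm
      rw [Finset.mem_Ico] at hm
      by_cases h0 : ftilde m = 0
      · simp [h0]
      · have := hf1 m h0
        omega
  · intro n hn
    rw [Finset.mem_Ico] at hn
    have : ∀ m : ℤ, ftilde m * gtilde (n - m) = 0 := by
      intro m
      by_contra h
      have h1 := hf1 m (left_ne_zero_of_mul h)
      have h2 := hg1 _ (right_ne_zero_of_mul h)
      omega
    simp [this]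
end
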